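/- arXiv:1202.6578 — 8 statements merged into one kernel-verified Lean document; each statement's English description precedes it below -/
import Mathlib

section
/- Let Λ be an additive subgroup of ℝ³ × ℝ such that (S ā, t) ∈ Λ whenever (ā, t) ∈ Λ and S ∈ SO(3). Then there exists an additive subgroup H of ℝ such that either Λ = {(0̄, t) : t ∈ H} or Λ = {(ā, t) : ā ∈ ℝ³, t ∈ H}. Conversely, every additive subgroup of either of these two forms is invariant under all maps (ā, t) ↦ (S ā, t) with S ∈ SO(3). -/
/-- A 3×3 real matrix is in SO(3) iff it is orthogonal with determinant 1. -/
def IsSO3 (S : Matrix (Fin 3) (Fin 3) ℝ) : Prop :=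
  S.transpose * S = 1 ∧ S.det = 1

/-!
`SO(n)` acts transitively on each sphere when `n ≥ 2`: of two vectors of equal length, one is
carried to the other by a reflection, and the determinant is corrected by a second reflection
fixing the target. Hence, if `Λ` contains `(v, t)` with `v ≠ 0`, it contains `(u, t)` for every `u`
with `|u| = |v|`. Every vector of length at most `2|v|` is a difference of two such `u`, so the
fibre of `Λ` over `0` contains a neighbourhood of the origin and, `ℝⁿ` being connected, is
everything.
-/

open Matrix Topology

section ProductSubgroups

variable {G A : Type*} [AddGroup G] [AddGroup A] {Λ : AddSubgroup (G × A)}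

theorem eq_bot_prod_map_snd (h : ∀ p ∈ Λ, p.1 = 0) :
    Λ = (⊥ : AddSubgroup G).prod (Λ.map (AddMonoidHom.snd G A)) := by
  refine le_antisymm
    (AddSubgroup.le_prod_iff.2 ⟨AddSubgroup.map_le_iff_le_comap.2 h, le_rfl⟩) ?_
  rintro ⟨_, _⟩ ⟨rfl, ⟨a, t⟩, hp, rfl⟩
  obtain rfl : a = 0 := h _ hp
  exact hp

theorem eq_top_prod_map_snd (h : Λ.comap (AddMonoidHom.inl G A) = ⊤) :
    Λ = (⊤ : AddSubgroup G).prod (Λ.map (AddMonoidHom.snd G A)) := by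
  refine le_antisymm (AddSubgroup.le_prod_iff.2 ⟨le_top, le_rfl⟩) ?_
  rintro ⟨b, _⟩ ⟨-, ⟨a, t⟩, hp, rfl⟩
  have hmem : (b - a, (0 : A)) ∈ Λ := (AddSubgroup.eq_top_iff' _).1 h (b - a)
  simpa using Λ.add_mem hmem hp

end ProductSubgroups

theorem eq_top_of_mem_nhds {G : Type*} [AddGroup G] [TopologicalSpace G]
    [SeparatelyContinuousAdd G] [PreconnectedSpace G] {K : AddSubgroup G} {g : G}
    (hK : (K : Set G) ∈ 𝓝 g) : K = ⊤ := by
  have hopen : IsOpen (K : Set G) := K.isOpen_of_mem_nhds hK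
  have hclopen : IsClopen (K : Set G) := ⟨K.isClosed_of_isOpen hopen, hopen⟩
  exact SetLike.coe_injective (hclopen.eq_univ ⟨0, K.zero_mem⟩)

section Householder

variable {n F : Type*} [Fintype n] [DecidableEq n] [Field F]

/-- The Householder matrix of `w`, i.e. the matrix of the reflection in the hyperplane orthogonal
to `w`. If `w ⬝ᵥ w = 0`, division by zero makes it the identity matrix. -/
def householder (w : n → F) : Matrix n n F :=
  1 - (2 / (w ⬝ᵥ w)) • vecMulVec w w

theorem householder_mulVec (w v : n → F) :
    householder w *ᵥ v = v - (2 * (w ⬝ᵥ v) / (w ⬝ᵥ w)) • w := by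
  rw [householder, sub_mulVec, one_mulVec, smul_mulVec, vecMulVec_mulVec, op_smul_eq_smul,
    smul_smul, div_mul_eq_mul_div]

theorem householder_mulVec_of_dotProduct_eq_zero {w v : n → F} (h : w ⬝ᵥ v = 0) :
    householder w *ᵥ v = v := by
  simp [householder_mulVec, h]

theorem householder_sub_mulVec {u v : n → F} (h : u ⬝ᵥ u = v ⬝ᵥ v)
    (huv : (u - v) ⬝ᵥ (u - v) ≠ 0) : householder (u - v) *ᵥ u = v := by
  have hcoeff : 2 * ((u - v) ⬝ᵥ u) = (u - v) ⬝ᵥ (u - v) := by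
    simp only [sub_dotProduct, dotProduct_sub, dotProduct_comm v u]
    linear_combination h
  rw [householder_mulVec, hcoeff, div_self huv, one_smul, sub_sub_cancel]

theorem householder_mul_self {w : n → F} (hw : w ⬝ᵥ w ≠ 0) :
    householder w * householder w = 1 := by
  have hcoeff : 2 / (w ⬝ᵥ w) * (2 / (w ⬝ᵥ w)) * (w ⬝ᵥ w) = 2 / (w ⬝ᵥ w) * 2 := by
    rw [mul_assoc, div_mul_cancel₀ _ hw]
  simp only [householder, sub_mul, mul_sub, one_mul, mul_one, smul_mul_assoc, mul_smul_comm,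
    vecMulVec_mul_vecMulVec, vecMulVec_smul, smul_smul]
  linear_combination (norm := module) hcoeff • vecMulVec w w

theorem householder_mem_orthogonalGroup {w : n → F} (hw : w ⬝ᵥ w ≠ 0) :
    householder w ∈ orthogonalGroup n F := by
  have hsymm : (householder w)ᵀ = householder w := by
    simp [householder, transpose_vecMulVec]
  rw [mem_orthogonalGroup_iff, hsymm, householder_mul_self hw]

theorem det_householder {w : n → F} (hw : w ⬝ᵥ w ≠ 0) : (householder w).det = -1 := by
  rw [householder, sub_eq_add_neg, ← neg_smul, ← smul_vecMulVec, vecMulVec_eq Unit,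
    det_one_add_replicateCol_mul_replicateRow, dotProduct_smul, smul_eq_mul, neg_mul,
    div_mul_cancel₀ _ hw]
  norm_num

end Householder

theorem exists_sub_eq_of_dotProduct_self_le {n : Type*} [Fintype n] [Nontrivial n]
    {x : n → ℝ} {c : ℝ} (hx : x ⬝ᵥ x ≤ 4 * c) :
    ∃ u u' : n → ℝ, u ⬝ᵥ u = c ∧ u' ⬝ᵥ u' = c ∧ u - u' = x := by
  obtain ⟨w, hw, hwx⟩ := exists_ne_zero_dotProduct_eq_zero x
  have hxw : x ⬝ᵥ w = 0 := by rw [dotProduct_comm, hwx]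
  have hw' : 0 < w ⬝ᵥ w := by simpa using dotProduct_star_self_pos_iff.2 hw
  obtain ⟨r, hr⟩ : ∃ r : ℝ, r ^ 2 * (w ⬝ᵥ w) = c - x ⬝ᵥ x / 4 :=
    ⟨√((c - x ⬝ᵥ x / 4) / (w ⬝ᵥ w)), by
      rw [Real.sq_sqrt (div_nonneg (by linarith) hw'.le), div_mul_cancel₀ _ hw'.ne']⟩
  refine ⟨r • w + (1 / 2 : ℝ) • x, r • w - (1 / 2 : ℝ) • x, ?_, ?_, by module⟩ <;>
  · simp only [add_dotProduct, dotProduct_add, sub_dotProduct, dotProduct_sub, smul_dotProduct,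
      dotProduct_smul, smul_eq_mul, hwx, hxw]
    linear_combination hr

section SpecialOrthogonalGroup

variable {n : Type*} [Fintype n] [DecidableEq n] [Nontrivial n]

theorem exists_mem_specialOrthogonalGroup_mulVec_eq {F : Type*} [Field F] [LinearOrder F]
    [IsStrictOrderedRing F] {u v : n → F} (h : u ⬝ᵥ u = v ⬝ᵥ v) :
    ∃ S ∈ specialOrthogonalGroup n F, S *ᵥ u = v := by
  obtain rfl | huv := eq_or_ne u v
  · exact ⟨1, one_mem _, one_mulVec u⟩
  obtain ⟨w, hw, hwv⟩ := exists_ne_zero_dotProduct_eq_zero v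
  have hw' : w ⬝ᵥ w ≠ 0 := dotProduct_self_eq_zero.not.2 hw
  have huv' : (u - v) ⬝ᵥ (u - v) ≠ 0 := dotProduct_self_eq_zero.not.2 (sub_ne_zero.2 huv)
  refine ⟨householder w * householder (u - v), mem_specialOrthogonalGroup_iff.2 ⟨?_, ?_⟩, ?_⟩
  · exact mul_mem (householder_mem_orthogonalGroup hw') (householder_mem_orthogonalGroup huv')
  · rw [det_mul, det_householder hw', det_householder huv', neg_mul_neg, one_mul]
  · rw [← mulVec_mulVec, householder_sub_mulVec h huv',
      householder_mulVec_of_dotProduct_eq_zero hwv]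

variable {A : Type*} [AddGroup A] {Λ : AddSubgroup ((n → ℝ) × A)}

theorem comap_inl_eq_top_of_mem
    (hΛ : ∀ S ∈ specialOrthogonalGroup n ℝ, ∀ p ∈ Λ, (S *ᵥ p.1, p.2) ∈ Λ)
    {p : (n → ℝ) × A} (hp : p ∈ Λ) (hp0 : p.1 ≠ 0) :
    Λ.comap (AddMonoidHom.inl (n → ℝ) A) = ⊤ := by
  have hsphere : ∀ u, u ⬝ᵥ u = p.1 ⬝ᵥ p.1 → (u, p.2) ∈ Λ := fun u hu => by
    obtain ⟨S, hS, rfl⟩ := exists_mem_specialOrthogonalGroup_mulVec_eq hu.symm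
    exact hΛ S hS p hp
  have hnhds : {x : n → ℝ | x ⬝ᵥ x < 4 * (p.1 ⬝ᵥ p.1)} ∈ 𝓝 0 := by
    refine (isOpen_lt (continuous_id.dotProduct continuous_id) continuous_const).mem_nhds ?_
    simpa using dotProduct_star_self_pos_iff.2 hp0
  refine eq_top_of_mem_nhds (Filter.mem_of_superset hnhds fun x hx => ?_)
  obtain ⟨u, u', hu, hu', rfl⟩ := exists_sub_eq_of_dotProduct_self_le (le_of_lt hx)
  simpa using Λ.sub_mem (hsphere u hu) (hsphere u' hu')

theorem SO3_invariant_addSubgroups_general (Λ : AddSubgroup ((n → ℝ) × A)) :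
    (∀ S ∈ specialOrthogonalGroup n ℝ, ∀ p ∈ Λ, (S *ᵥ p.1, p.2) ∈ Λ) ↔
      ∃ H : AddSubgroup A, Λ = (⊥ : AddSubgroup (n → ℝ)).prod H ∨
        Λ = (⊤ : AddSubgroup (n → ℝ)).prod H := by
  constructor
  · intro hΛ
    refine ⟨Λ.map (AddMonoidHom.snd (n → ℝ) A), ?_⟩
    by_cases h : ∀ p ∈ Λ, p.1 = 0
    · exact Or.inl (eq_bot_prod_map_snd h)
    · push Not at h
      obtain ⟨p, hp, hp0⟩ := h
      exact Or.inr (eq_top_prod_map_snd (comap_inl_eq_top_of_mem hΛ hp hp0))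
  · rintro ⟨H, rfl | rfl⟩ S - p ⟨hp, hpH⟩
    · obtain hp : p.1 = 0 := hp
      exact ⟨by simp [hp], hpH⟩
    · exact ⟨AddSubgroup.mem_top _, hpH⟩

end SpecialOrthogonalGroup

theorem isSO3_iff_mem_specialOrthogonalGroup {S : Matrix (Fin 3) (Fin 3) ℝ} :
    IsSO3 S ↔ S ∈ specialOrthogonalGroup (Fin 3) ℝ := by
  rw [mem_specialOrthogonalGroup_iff, mem_orthogonalGroup_iff', IsSO3]

/-- An additive subgroup `Λ` of `ℝ³ × ℝ` is invariant under all maps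
`(ā, t) ↦ (S ā, t)` with `S ∈ SO(3)` if and only if there is an additive subgroup
`H` of `ℝ` such that `Λ = {0̄} × H` or `Λ = ℝ³ × H`. -/
theorem SO3_invariant_addSubgroups (Λ : AddSubgroup ((Fin 3 → ℝ) × ℝ)) :
    (∀ S : Matrix (Fin 3) (Fin 3) ℝ, IsSO3 S →
        ∀ p ∈ Λ, (S.mulVec p.1, p.2) ∈ Λ) ↔
      ∃ H : AddSubgroup ℝ,
        (Λ : Set ((Fin 3 → ℝ) × ℝ)) = {p | p.1 = 0 ∧ p.2 ∈ H} ∨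
        (Λ : Set ((Fin 3 → ℝ) × ℝ)) = {p | p.2 ∈ H} := by
  simpa [isSO3_iff_mem_specialOrthogonalGroup, SetLike.ext_iff, Set.ext_iff, AddSubgroup.mem_prod]
    using SO3_invariant_addSubgroups_general Λ
end

section
/- An equivalence relation ∼ on ℝ³ × ℝ is 𝒢_N-invariant if and only if there exists an additive subgroup H of ℝ such that either (i) for all points, (x̄, t) ∼ (ȳ, s) ⟺ (x̄ = ȳ and s − t ∈ H), or (ii) for all points, (x̄, t) ∼ (ȳ, s) ⟺ s − t ∈ H. -/
/-- A relation on `ℝ³ × ℝ` is invariant under the Newton group `𝒢_N` (the group of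
maps `(x̄, t) ↦ (S x̄ + b̄, t + b⁴)` with `S ∈ SO(3)`) if it is preserved by all
these maps. -/
def IsNewtonInvariant (r : ((Fin 3 → ℝ) × ℝ) → ((Fin 3 → ℝ) × ℝ) → Prop) : Prop :=
  ∀ S : Matrix (Fin 3) (Fin 3) ℝ, IsSO3 S → ∀ b : (Fin 3 → ℝ) × ℝ,
    ∀ p q : (Fin 3 → ℝ) × ℝ, r p q →
      r (S.mulVec p.1 + b.1, p.2 + b.2) (S.mulVec q.1 + b.1, q.2 + b.2)

/-!
Translation invariance makes `r p q` equivalent to `q - p ∈ K` for an additive subgroup `K`. If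
`(v, t) ∈ K` with `v ≠ 0`, then `(S v - v, 0) ∈ K` for every rotation `S`. Rotations act
transitively on spheres, so `K` contains all differences of spatial vectors of the same length as
`v`; these fill a ball, which generates the whole space. Hence `K = 0 × H` or `K = ℝ³ × H`.
-/

open Matrix Topology

section Householder

variable {ι K : Type*} [Fintype ι] [DecidableEq ι] [Field K]

/-- The Householder matrix of `n`: the reflection in the hyperplane orthogonal to `n`. It is the
identity matrix when `n ⬝ᵥ n = 0`, because of division by zero. -/
def householderMatrix (n : ι → K) : Matrix ι ι K :=
  1 - vecMulVec n ((2 / (n ⬝ᵥ n)) • n)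

theorem householderMatrix_mulVec (n x : ι → K) :
    householderMatrix n *ᵥ x = x - (2 * (n ⬝ᵥ x) / (n ⬝ᵥ n)) • n := by
  rw [householderMatrix, sub_mulVec, one_mulVec, vecMulVec_mulVec, op_smul_eq_smul,
    smul_dotProduct, smul_eq_mul, div_mul_eq_mul_div]

theorem householderMatrix_mulVec_of_dotProduct_eq_zero {n x : ι → K} (h : n ⬝ᵥ x = 0) :
    householderMatrix n *ᵥ x = x := by
  simp [householderMatrix_mulVec, h]

theorem householderMatrix_sub_mulVec {a b : ι → K} (hab : a ⬝ᵥ a = b ⬝ᵥ b)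
    (hne : (a - b) ⬝ᵥ (a - b) ≠ 0) : householderMatrix (a - b) *ᵥ a = b := by
  have h : 2 * ((a - b) ⬝ᵥ a) = (a - b) ⬝ᵥ (a - b) := by
    simp only [sub_dotProduct, dotProduct_sub, dotProduct_comm b a, ← hab]
    ring
  rw [householderMatrix_mulVec, h, div_self hne, one_smul, sub_sub_cancel]

theorem householderMatrix_mul_self (n : ι → K) :
    householderMatrix n * householderMatrix n = 1 := by
  refine ext_of_mulVec_single fun i => ?_
  rw [← mulVec_mulVec, one_mulVec]
  generalize (Pi.single i 1 : ι → K) = x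
  obtain hn | hn := eq_or_ne (n ⬝ᵥ n) 0
  · simp [householderMatrix_mulVec, hn]
  · rw [householderMatrix_mulVec n x, mulVec_sub, mulVec_smul, householderMatrix_mulVec,
      householderMatrix_mulVec, mul_div_cancel_right₀ _ hn]
    module

theorem transpose_householderMatrix (n : ι → K) :
    (householderMatrix n)ᵀ = householderMatrix n := by
  simp [householderMatrix, vecMulVec_smul]

theorem det_householderMatrix {n : ι → K} (hn : n ⬝ᵥ n ≠ 0) :
    (householderMatrix n).det = -1 := by
  rw [householderMatrix, sub_eq_add_neg, ← neg_vecMulVec, vecMulVec_eq Unit,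
    det_one_add_replicateCol_mul_replicateRow, smul_dotProduct, dotProduct_neg, smul_eq_mul,
    mul_neg, div_mul_cancel₀ _ hn]
  norm_num

theorem householderMatrix_mul_mem_specialOrthogonalGroup {m n : ι → K} (hm : m ⬝ᵥ m ≠ 0)
    (hn : n ⬝ᵥ n ≠ 0) :
    householderMatrix m * householderMatrix n ∈ specialOrthogonalGroup ι K := by
  have mem_orthogonalGroup (u : ι → K) : householderMatrix u ∈ orthogonalGroup ι K := by
    rw [mem_orthogonalGroup_iff, transpose_householderMatrix, householderMatrix_mul_self]
  refine mem_specialOrthogonalGroup_iff.2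
    ⟨mul_mem (mem_orthogonalGroup m) (mem_orthogonalGroup n), ?_⟩
  rw [det_mul, det_householderMatrix hm, det_householderMatrix hn, neg_mul_neg, one_mul]

end Householder

section Rotation

variable {ι : Type*} [Fintype ι] [Nontrivial ι]

theorem exists_mem_specialOrthogonalGroup_mulVec_eq_s6 [DecidableEq ι] {a b : ι → ℝ}
    (hab : a ⬝ᵥ a = b ⬝ᵥ b) : ∃ S ∈ specialOrthogonalGroup ι ℝ, S *ᵥ a = b := by
  obtain rfl | hne := eq_or_ne a b
  · exact ⟨1, one_mem _, one_mulVec a⟩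
  have hsub : (a - b) ⬝ᵥ (a - b) ≠ 0 := dotProduct_self_eq_zero.not.2 (sub_ne_zero.2 hne)
  -- A reflection fixing `a` corrects the determinant of the one exchanging `a` and `b`.
  obtain ⟨n, hn, hna⟩ := exists_ne_zero_dotProduct_eq_zero a
  refine ⟨householderMatrix (a - b) * householderMatrix n,
    householderMatrix_mul_mem_specialOrthogonalGroup hsub (dotProduct_self_eq_zero.not.2 hn), ?_⟩
  rw [← mulVec_mulVec, householderMatrix_mulVec_of_dotProduct_eq_zero hna,
    householderMatrix_sub_mulVec hab hsub]

theorem exists_dotProduct_eq_zero_and_dotProduct_self_eq (w : ι → ℝ) {c : ℝ} (hc : 0 ≤ c) :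
    ∃ z : ι → ℝ, z ⬝ᵥ w = 0 ∧ z ⬝ᵥ z = c := by
  obtain ⟨n, hn, hnw⟩ := exists_ne_zero_dotProduct_eq_zero w
  have hnn : 0 < n ⬝ᵥ n := by simpa using dotProduct_self_star_pos_iff.2 hn
  refine ⟨√(c / (n ⬝ᵥ n)) • n, by rw [smul_dotProduct, hnw, smul_zero], ?_⟩
  rw [smul_dotProduct, dotProduct_smul, smul_smul, Real.mul_self_sqrt (by positivity), smul_eq_mul,
    div_mul_cancel₀ _ hnn.ne']

theorem exists_sub_eq_of_dotProduct_self_le_s6 {w : ι → ℝ} {c : ℝ} (hw : w ⬝ᵥ w ≤ 4 * c) :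
    ∃ a b : ι → ℝ, a ⬝ᵥ a = c ∧ b ⬝ᵥ b = c ∧ a - b = w := by
  obtain ⟨z, hzw, hz⟩ := exists_dotProduct_eq_zero_and_dotProduct_self_eq w
    (c := c - w ⬝ᵥ w / 4) (by linarith)
  have dotProduct_self_add_half (ε : ℝ) (hε : ε ^ 2 = 1) :
      (z + (ε / 2) • w) ⬝ᵥ (z + (ε / 2) • w) = c := by
    simp only [add_dotProduct, dotProduct_add, smul_dotProduct, dotProduct_smul, smul_eq_mul,
      dotProduct_comm w z, hzw, hz]
    linear_combination (w ⬝ᵥ w / 4) * hε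
  exact ⟨_, _, dotProduct_self_add_half 1 (by norm_num),
    dotProduct_self_add_half (-1) (by norm_num), by module⟩

end Rotation

theorem addSubgroup_eq_top_of_mem_nhds_zero {G : Type*} [AddGroup G] [TopologicalSpace G]
    [ContinuousAdd G] [PreconnectedSpace G] {V : AddSubgroup G} (hV : (V : Set G) ∈ 𝓝 0) :
    V = ⊤ := by
  have hopen : IsOpen (V : Set G) := V.isOpen_of_mem_nhds hV
  exact SetLike.coe_injective
    (IsClopen.eq_univ ⟨V.isClosed_of_isOpen hopen, hopen⟩ ⟨0, V.zero_mem⟩)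

theorem addSubgroup_eq_top_of_forall_mulVec_sub_mem {ι : Type*} [Fintype ι] [DecidableEq ι]
    [Nontrivial ι] {V : AddSubgroup (ι → ℝ)} {v : ι → ℝ} (hv : v ≠ 0)
    (hV : ∀ S ∈ specialOrthogonalGroup ι ℝ, S *ᵥ v - v ∈ V) : V = ⊤ := by
  have sphere_sub_mem (a : ι → ℝ) (ha : a ⬝ᵥ a = v ⬝ᵥ v) : a - v ∈ V := by
    obtain ⟨S, hS, rfl⟩ := exists_mem_specialOrthogonalGroup_mulVec_eq_s6 ha.symm
    exact hV S hS
  have ball_subset : {w : ι → ℝ | w ⬝ᵥ w < 4 * (v ⬝ᵥ v)} ⊆ V := by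
    intro w hw
    obtain ⟨a, b, ha, hb, rfl⟩ := exists_sub_eq_of_dotProduct_self_le_s6 (le_of_lt hw)
    rw [← sub_sub_sub_cancel_right a b v]
    exact V.sub_mem (sphere_sub_mem a ha) (sphere_sub_mem b hb)
  have ball_mem_nhds : {w : ι → ℝ | w ⬝ᵥ w < 4 * (v ⬝ᵥ v)} ∈ 𝓝 0 := by
    refine (isOpen_lt (by fun_prop) continuous_const).mem_nhds ?_
    simpa using dotProduct_self_star_pos_iff.2 hv
  exact addSubgroup_eq_top_of_mem_nhds_zero (Filter.mem_of_superset ball_mem_nhds ball_subset)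

theorem exists_addSubgroup_forall_iff_sub_mem {A : Type*} [AddCommGroup A] {r : A → A → Prop}
    (hr : Equivalence r) (hadd : ∀ c a b, r a b → r (a + c) (b + c)) :
    ∃ K : AddSubgroup A, ∀ a b, r a b ↔ b - a ∈ K := by
  let con : AddCon A :=
    { r := r
      iseqv := hr
      add' := fun {a b c d} hab hcd =>
        hr.trans (hadd c a b hab) (by simpa only [add_comm b] using hadd b c d hcd) }
  refine ⟨con.addSubgroup, fun a b => ?_⟩
  calc
    r a b ↔ QuotientAddGroup.con con.addSubgroup a b := by
      rw [QuotientAddGroup.con_addSubgroup]; rfl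
    _ ↔ -a + b ∈ con.addSubgroup := QuotientAddGroup.leftRel_apply
    _ ↔ b - a ∈ con.addSubgroup := by rw [neg_add_eq_sub]

theorem eq_prod_comap_inl_comap_inr {E T : Type*} [AddGroup E] [AddGroup T]
    {K : AddSubgroup (E × T)} (hK : ∀ k ∈ K, (k.1, 0) ∈ K) :
    K = (K.comap (AddMonoidHom.inl E T)).prod (K.comap (AddMonoidHom.inr E T)) := by
  ext ⟨x, t⟩
  have hsplit : (x, t) = ((x, 0) + (0, t) : E × T) := by simp
  rw [AddSubgroup.mem_prod, AddSubgroup.mem_comap, AddSubgroup.mem_comap, AddMonoidHom.inl_apply,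
    AddMonoidHom.inr_apply]
  refine ⟨fun h => ?_, fun h => hsplit ▸ K.add_mem h.1 h.2⟩
  have hx : (x, 0) ∈ K := hK _ h
  rw [hsplit, K.add_mem_cancel_left hx] at h
  exact ⟨hx, h⟩

theorem exists_eq_bot_prod_or_eq_top_prod {E T : Type*} [AddGroup E] [AddGroup T]
    {K : AddSubgroup (E × T)}
    (hK : ∀ k ∈ K, k.1 ≠ 0 → K.comap (AddMonoidHom.inl E T) = ⊤) :
    ∃ H : AddSubgroup T, K = AddSubgroup.prod ⊥ H ∨ K = AddSubgroup.prod ⊤ H := by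
  refine ⟨K.comap (AddMonoidHom.inr E T), ?_⟩
  by_cases hfst : ∀ k ∈ K, k.1 = 0
  · have hbot : K.comap (AddMonoidHom.inl E T) = ⊥ :=
      (AddSubgroup.eq_bot_iff_forall _).2 fun _ hx => hfst _ hx
    exact .inl (hbot ▸ eq_prod_comap_inl_comap_inr fun k hk => hfst k hk ▸ K.zero_mem)
  · push Not at hfst
    obtain ⟨k, hk, hk0⟩ := hfst
    have htop := hK k hk hk0
    exact .inr (htop ▸ eq_prod_comap_inl_comap_inr fun k _ =>
      AddSubgroup.mem_comap.1 (htop ▸ AddSubgroup.mem_top k.1))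

/-- Invariance of a relation on `ℝ^ι × T` under the Newton group of `ι`-dimensional space with times
in `T`, that is, under the maps `(x, t) ↦ (S x + b, t + c)` with `S` a rotation. -/
def IsRotationTranslationInvariant {ι T : Type*} [Fintype ι] [DecidableEq ι] [Add T]
    (r : (ι → ℝ) × T → (ι → ℝ) × T → Prop) : Prop :=
  ∀ S ∈ specialOrthogonalGroup ι ℝ, ∀ b p q : (ι → ℝ) × T, r p q →
    r (S *ᵥ p.1 + b.1, p.2 + b.2) (S *ᵥ q.1 + b.1, q.2 + b.2)

section Invariance

variable {ι T : Type*} [Fintype ι] [DecidableEq ι]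
  {r : (ι → ℝ) × T → (ι → ℝ) × T → Prop}

theorem IsRotationTranslationInvariant.add_right [Add T] (h : IsRotationTranslationInvariant r)
    (c p q : (ι → ℝ) × T) (hpq : r p q) : r (p + c) (q + c) := by
  simpa only [one_mulVec, ← Prod.fst_add, ← Prod.snd_add] using h 1 (one_mem _) c p q hpq

theorem IsRotationTranslationInvariant.mulVec_sub_mem [AddGroup T]
    (h : IsRotationTranslationInvariant r) {K : AddSubgroup ((ι → ℝ) × T)}
    (hK : ∀ p q, r p q ↔ q - p ∈ K) {k : (ι → ℝ) × T} (hk : k ∈ K) {S : Matrix ι ι ℝ}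
    (hS : S ∈ specialOrthogonalGroup ι ℝ) :
    S *ᵥ k.1 - k.1 ∈ K.comap (AddMonoidHom.inl (ι → ℝ) T) := by
  obtain ⟨v, t⟩ := k
  have hrot : (S *ᵥ v, t) ∈ K := by
    simpa [hK] using h S hS 0 0 (v, t) ((hK 0 (v, t)).2 (by rwa [sub_zero]))
  simpa using K.sub_mem hrot hk

theorem isRotationTranslationInvariant_of_forall_iff [AddGroup T] {H : AddSubgroup T}
    (h : (∀ p q, r p q ↔ p.1 = q.1 ∧ q.2 - p.2 ∈ H) ∨ ∀ p q, r p q ↔ q.2 - p.2 ∈ H) :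
    IsRotationTranslationInvariant r := by
  intro S _ b p q hpq
  rcases h with h | h <;> rw [h] at hpq ⊢
  · exact ⟨by rw [hpq.1], by simpa using hpq.2⟩
  · simpa using hpq

theorem newton_invariant_equivalences_general [Nontrivial ι] [AddCommGroup T]
    (hr : Equivalence r) :
    IsRotationTranslationInvariant r ↔
      ∃ H : AddSubgroup T,
        (∀ p q, r p q ↔ p.1 = q.1 ∧ q.2 - p.2 ∈ H) ∨ (∀ p q, r p q ↔ q.2 - p.2 ∈ H) := by
  refine ⟨fun hinv => ?_, fun ⟨_, h⟩ => isRotationTranslationInvariant_of_forall_iff h⟩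
  obtain ⟨K, hK⟩ := exists_addSubgroup_forall_iff_sub_mem hr hinv.add_right
  obtain ⟨H, hKH⟩ := exists_eq_bot_prod_or_eq_top_prod fun k hk hk0 =>
    addSubgroup_eq_top_of_forall_mulVec_sub_mem hk0 fun _ hS => hinv.mulVec_sub_mem hK hk hS
  refine ⟨H, hKH.imp ?_ ?_⟩ <;> rintro rfl p q
  · simp [hK, AddSubgroup.mem_prod, sub_eq_zero, eq_comm]
  · simp [hK, AddSubgroup.mem_prod]

end Invariance

theorem isNewtonInvariant_iff (r : (Fin 3 → ℝ) × ℝ → (Fin 3 → ℝ) × ℝ → Prop) :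
    IsNewtonInvariant r ↔ IsRotationTranslationInvariant r := by
  simp only [IsRotationTranslationInvariant, IsNewtonInvariant, IsSO3,
    mem_specialOrthogonalGroup_iff, mem_orthogonalGroup_iff']

/-- An equivalence relation on `ℝ³ × ℝ` is Newton-invariant iff, for some additive
subgroup `H` of `ℝ`, either (i) `(x̄, t) ∼ (ȳ, s) ↔ x̄ = ȳ ∧ s - t ∈ H`, or
(ii) `(x̄, t) ∼ (ȳ, s) ↔ s - t ∈ H`. -/
theorem newton_invariant_equivalences
    (r : ((Fin 3 → ℝ) × ℝ) → ((Fin 3 → ℝ) × ℝ) → Prop) (hr : Equivalence r) :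
    IsNewtonInvariant r ↔
      ∃ H : AddSubgroup ℝ,
        (∀ p q : (Fin 3 → ℝ) × ℝ, r p q ↔ p.1 = q.1 ∧ q.2 - p.2 ∈ H) ∨
        (∀ p q : (Fin 3 → ℝ) × ℝ, r p q ↔ q.2 - p.2 ∈ H) := by
  exact (isNewtonInvariant_iff r).trans (newton_invariant_equivalences_general hr)
end

section
/- Let ∼ be a nontrivial C𝒢_N-invariant equivalence relation on ℝ³ × ℝ which is not the worldline relation (i.e., ∼ is not the relation given by (x̄, t) ∼ (ȳ, s) ⟺ x̄ = ȳ). Then ∼ is standard Newtonian simultaneity: (x̄, t) ∼ (ȳ, s) ⟺ t = s. -/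
/-- A relation on `ℝ³ × ℝ` is invariant under the conformal Newton group `C𝒢_N`
(the group of maps `(x̄, t) ↦ (λ S x̄ + b̄, λ t + b⁴)` with `λ > 0`, `S ∈ SO(3)`)
if it is preserved by all these maps. -/
def IsConformalNewtonInvariant
    (r : ((Fin 3 → ℝ) × ℝ) → ((Fin 3 → ℝ) × ℝ) → Prop) : Prop :=
  ∀ l : ℝ, 0 < l → ∀ S : Matrix (Fin 3) (Fin 3) ℝ, IsSO3 S →
    ∀ b : (Fin 3 → ℝ) × ℝ, ∀ p q : (Fin 3 → ℝ) × ℝ, r p q →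
      r (l • S.mulVec p.1 + b.1, l * p.2 + b.2)
        (l • S.mulVec q.1 + b.1, l * q.2 + b.2)

/-!
Translations and dilations make the displacements `q - p` of related points a linear subspace `W` of
space-time `V × 𝕜`, which determines the relation. If `W` contains some `(v, t)` with `v ≠ 0`, a
rotation moving `v` to `v' ≠ v` fixes the time component, hence `(v' - v, 0) ∈ W`, and
irreducibility of the rotation action puts all of `V × 0` into `W`. So `W` is one of `0`, `0 × 𝕜`,
`V × 0`, `V × 𝕜`, corresponding to equality, worldlines, simultaneity and the total relation.
-/

section ConformalInvariance

variable {𝕜 G E : Type*} [Field 𝕜] [LinearOrder 𝕜] [Monoid G] [AddCommGroup E] [Module 𝕜 E]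
  {σ : Representation 𝕜 G E} {r : E → E → Prop}

/-- Invariance of a relation under the maps `p ↦ l • σ g p + b` with `l > 0`. The conformal Newton
group is the case where `SO(3)` acts on `ℝ³ × ℝ` by rotating space and fixing time. -/
def IsConformalInvariant (σ : Representation 𝕜 G E) (r : E → E → Prop) : Prop :=
  ∀ l : 𝕜, 0 < l → ∀ (g : G) (b p q : E), r p q → r (l • σ g p + b) (l • σ g q + b)

namespace IsConformalInvariant

theorem rel_smul_of_pos (h : IsConformalInvariant σ r) {l : 𝕜} (hl : 0 < l) {p q : E}
    (hpq : r p q) : r (l • p) (l • q) := by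
  simpa only [map_one, Module.End.one_apply, add_zero] using h l hl 1 0 p q hpq

variable [IsStrictOrderedRing 𝕜]

theorem rel_apply (h : IsConformalInvariant σ r) (g : G) {p q : E} (hpq : r p q) :
    r (σ g p) (σ g q) := by
  simpa only [one_smul, add_zero] using h 1 one_pos g 0 p q hpq

theorem rel_add_right (h : IsConformalInvariant σ r) (b : E) {p q : E} (hpq : r p q) :
    r (p + b) (q + b) := by
  simpa only [map_one, Module.End.one_apply, one_smul] using h 1 one_pos 1 b p q hpq

theorem rel_iff_rel_zero_sub (h : IsConformalInvariant σ r) {p q : E} : r p q ↔ r 0 (q - p) where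
  mp hpq := by simpa only [add_neg_cancel, sub_eq_add_neg] using h.rel_add_right (-p) hpq
  mpr hpq := by simpa only [zero_add, sub_add_cancel] using h.rel_add_right p hpq

theorem rel_zero_neg (h : IsConformalInvariant σ r) (hr : Equivalence r) {v : E} (hv : r 0 v) :
    r 0 (-v) := by
  simpa only [zero_sub] using h.rel_iff_rel_zero_sub.mp (hr.symm hv)

theorem rel_zero_smul (h : IsConformalInvariant σ r) (hr : Equivalence r) (l : 𝕜) {v : E}
    (hv : r 0 v) : r 0 (l • v) := by
  have rel_of_pos {l : 𝕜} (hl : 0 < l) : r 0 (l • v) := by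
    simpa only [smul_zero] using h.rel_smul_of_pos hl hv
  rcases lt_trichotomy l 0 with hl | rfl | hl
  · simpa only [neg_smul, neg_neg] using h.rel_zero_neg hr (rel_of_pos (neg_pos.mpr hl))
  · simpa only [zero_smul] using hr.refl 0
  · exact rel_of_pos hl

/-- The subrepresentation of displacements `q - p` of points `p`, `q` related by a conformally
invariant equivalence relation, encoded as the class of the origin. -/
def displacements (h : IsConformalInvariant σ r) (hr : Equivalence r) : Subrepresentation σ where
  toSubmodule :=
    { carrier := {v | r 0 v}
      zero_mem' := hr.refl 0
      add_mem' := fun {v w} hv hw ↦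
        hr.trans hw (by simpa only [zero_add] using h.rel_add_right w hv)
      smul_mem' := fun l _ hv ↦ h.rel_zero_smul hr l hv }
  apply_mem_toSubmodule g v hv := map_zero (σ g) ▸ h.rel_apply g hv

theorem rel_iff_sub_mem_displacements (h : IsConformalInvariant σ r) (hr : Equivalence r)
    {p q : E} : r p q ↔ q - p ∈ (h.displacements hr).toSubmodule :=
  h.rel_iff_rel_zero_sub

end IsConformalInvariant

end ConformalInvariance

section Irreducible

open Representation

variable {𝕜 G V F : Type*} [Field 𝕜] [Group G] [AddCommGroup V] [Module 𝕜 V]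
  [AddCommGroup F] [Module 𝕜 F] {ρ : Representation 𝕜 G V}
  (W : Subrepresentation (ρ.prod (trivial 𝕜 G F)))

theorem exists_ne_zero_inl_mem_of_fst_ne_zero (hρ : ρ.invariants = ⊥) {p : V × F}
    (hp : p ∈ W.toSubmodule) (hp₁ : p.1 ≠ 0) : ∃ v : V, v ≠ 0 ∧ (v, 0) ∈ W.toSubmodule := by
  have not_fixed : p.1 ∉ ρ.invariants := by simpa only [hρ, Submodule.mem_bot] using hp₁
  obtain ⟨g, hg⟩ := not_forall.mp not_fixed
  have rotated_mem : (ρ g p.1, p.2) ∈ W.toSubmodule := W.apply_mem_toSubmodule g hp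
  refine ⟨ρ g p.1 - p.1, sub_ne_zero.mpr hg, ?_⟩
  simpa only [Prod.sub_def, sub_self] using W.toSubmodule.sub_mem rotated_mem hp

theorem inl_mem_of_isIrreducible [ρ.IsIrreducible]
    (hne : ∃ v : V, v ≠ 0 ∧ (v, 0) ∈ W.toSubmodule) (v : V) : (v, 0) ∈ W.toSubmodule := by
  let U : Subrepresentation ρ :=
    { toSubmodule := W.toSubmodule.comap (LinearMap.inl 𝕜 V F)
      apply_mem_toSubmodule := fun g u hu ↦ by simpa using W.apply_mem_toSubmodule g hu }
  obtain ⟨u, hu, huW⟩ := hne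
  have hU : U ≠ ⊥ := fun hbot ↦ hu (hbot ▸ show u ∈ U from huW : u ∈ (⊥ : Subrepresentation ρ))
  exact show v ∈ U from (eq_bot_or_eq_top U).resolve_left hU ▸ Submodule.mem_top

theorem eq_bot_prod_or_eq_top_prod_of_isIrreducible [ρ.IsIrreducible] (hρ : ρ.invariants = ⊥) :
    W.toSubmodule = (⊥ : Submodule 𝕜 V).prod (W.toSubmodule.comap (LinearMap.inr 𝕜 V F)) ∨
      W.toSubmodule = (⊤ : Submodule 𝕜 V).prod (W.toSubmodule.comap (LinearMap.inr 𝕜 V F)) := by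
  by_cases hfst : ∀ p ∈ W.toSubmodule, p.1 = 0
  · left
    ext ⟨v, t⟩
    suffices (v, t) ∈ W.toSubmodule ↔ v = 0 ∧ (0, t) ∈ W.toSubmodule by simpa
    refine ⟨fun h ↦ ?_, fun ⟨hv, h⟩ ↦ hv ▸ h⟩
    obtain rfl : v = 0 := hfst _ h
    exact ⟨rfl, h⟩
  · right
    push Not at hfst
    obtain ⟨p, hp, hp₁⟩ := hfst
    have inl_mem : ∀ v : V, (v, 0) ∈ W.toSubmodule :=
      inl_mem_of_isIrreducible W (exists_ne_zero_inl_mem_of_fst_ne_zero W hρ hp hp₁)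
    ext ⟨v, t⟩
    suffices (v, t) ∈ W.toSubmodule ↔ (0, t) ∈ W.toSubmodule by simpa
    simpa using W.toSubmodule.add_mem_iff_right (y := (0, t)) (inl_mem v)

theorem conformal_newton_invariant_is_simultaneity_general [LinearOrder 𝕜] [IsStrictOrderedRing 𝕜]
    [ρ.IsIrreducible] (hρ : ρ.invariants = ⊥) {r : V × 𝕜 → V × 𝕜 → Prop} (hr : Equivalence r)
    (hinv : IsConformalInvariant (ρ.prod (trivial 𝕜 G 𝕜)) r) (hnot_total : ¬ ∀ p q, r p q)
    (hnot_id : ¬ ∀ p q, r p q → p = q) (hnot_wl : ¬ ∀ p q, r p q ↔ p.1 = q.1) (p q : V × 𝕜) :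
    r p q ↔ p.2 = q.2 := by
  obtain ⟨W, rel_iff⟩ : ∃ W : Subrepresentation (ρ.prod (trivial 𝕜 G 𝕜)),
      ∀ p q, r p q ↔ q - p ∈ W.toSubmodule :=
    ⟨hinv.displacements hr, fun _ _ ↦ hinv.rel_iff_sub_mem_displacements hr⟩
  rcases eq_bot_prod_or_eq_top_prod_of_isIrreducible W hρ with hW | hW <;>
    rcases eq_bot_or_eq_top (W.toSubmodule.comap (LinearMap.inr 𝕜 V 𝕜)) with hT | hT <;>
    rw [hT] at hW
  · exact absurd (fun p q ↦ by simp [rel_iff, hW, sub_eq_zero, Prod.ext_iff, eq_comm]) hnot_id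
  · exact absurd (fun p q ↦ by simp [rel_iff, hW, sub_eq_zero, eq_comm]) hnot_wl
  · simp [rel_iff, hW, sub_eq_zero, eq_comm]
  · exact absurd (fun p q ↦ by simp [rel_iff, hW]) hnot_total

end Irreducible

section Rotations

open Matrix

variable {ι 𝕜 : Type*} [Fintype ι] [DecidableEq ι]

section CommRing

variable [CommRing 𝕜] {i j : ι}

variable (𝕜) in
/-- The rotation by a right angle in the `(i, j)`-coordinate plane, sending `eᵢ` to `eⱼ` and `eⱼ` to
`-eᵢ`, as a coordinate swap followed by a sign change. It is a rotation only for `i ≠ j`. -/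
def quarterTurn (i j : ι) : Matrix ι ι 𝕜 :=
  diagonal (Function.update 1 i (-1)) * swap 𝕜 i j

theorem quarterTurn_mem_specialOrthogonalGroup (hij : i ≠ j) :
    quarterTurn 𝕜 i j ∈ specialOrthogonalGroup ι 𝕜 := by
  let d : ι → 𝕜 := Function.update 1 i (-1)
  have hdd (k : ι) : d k * d k = 1 := by
    rcases eq_or_ne k i with rfl | hk <;> simp [d, *]
  refine mem_specialOrthogonalGroup_iff.mpr ⟨(mem_orthogonalGroup_iff ι 𝕜).mpr ?_, ?_⟩
  · calc diagonal d * swap 𝕜 i j * (diagonal d * swap 𝕜 i j)ᵀ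
        = diagonal d * (swap 𝕜 i j * swap 𝕜 i j) * diagonal d := by
          rw [transpose_mul, transpose_swap, diagonal_transpose]
          simp only [Matrix.mul_assoc]
      _ = diagonal fun k ↦ d k * d k := by
          rw [swap_mul_self, Matrix.mul_one, diagonal_mul_diagonal]
      _ = 1 := by simp only [hdd, diagonal_one]
  · have det_diagonal_d : (diagonal d).det = -1 := by
      simp [d, det_diagonal, Finset.prod_update_of_mem]
    have det_swap : (swap 𝕜 i j).det = -1 := by
      simp [swap, det_permutation, Equiv.Perm.sign_swap hij]
    rw [quarterTurn, det_mul, det_diagonal_d, det_swap, neg_mul_neg, one_mul]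

theorem quarterTurn_mulVec (hij : i ≠ j) (v : ι → 𝕜) :
    quarterTurn 𝕜 i j *ᵥ v = Function.update (Function.update v i (-v j)) j (v i) := by
  ext k
  rw [quarterTurn, ← mulVec_mulVec, mulVec_diagonal, swap_mulVec]
  rcases eq_or_ne k i with rfl | hki
  · simp [hij]
  · rcases eq_or_ne k j with rfl | hkj <;> simp [Equiv.swap_apply_of_ne_of_ne, *]

variable (ι 𝕜) in
/-- The standard representation of the special orthogonal group on coordinate vectors. -/
def rotationRep : Representation 𝕜 (specialOrthogonalGroup ι 𝕜) (ι → 𝕜) :=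
  (toLinAlgEquiv' : Matrix ι ι 𝕜 ≃ₐ[𝕜] _).toMonoidHom.comp (specialOrthogonalGroup ι 𝕜).subtype

theorem smul_single_mem_of_quarterTurn_mem {p : Submodule 𝕜 (ι → 𝕜)} (hij : i ≠ j)
    (hp : ∀ v ∈ p, quarterTurn 𝕜 i j *ᵥ v ∈ p) {v : ι → 𝕜} (hv : v ∈ p) :
    (2 * (v i ^ 2 + v j ^ 2)) • Pi.single i 1 ∈ p := by
  -- The square of the quarter turn `J` negates the `(i, j)`-plane and fixes the other coordinates,
  -- so `w` is twice the projection of `v` to that plane; `vᵢ w - vⱼ J w` then isolates `eᵢ`.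
  let w := v - quarterTurn 𝕜 i j *ᵥ (quarterTurn 𝕜 i j *ᵥ v)
  have hw : w ∈ p := p.sub_mem hv (hp _ (hp v hv))
  convert p.sub_mem (p.smul_mem (v i) hw) (p.smul_mem (v j) (hp w hw)) using 1
  ext k
  simp only [w, quarterTurn_mulVec hij]
  rcases eq_or_ne k i with rfl | hki
  · simp only [Pi.smul_apply, Pi.single_eq_same, smul_eq_mul, mul_one, Function.update_self, ne_eq,
      hij, not_false_eq_true, Function.update_of_ne, Pi.sub_apply, sub_neg_eq_add, neg_add_rev]
    ring
  · rcases eq_or_ne k j with rfl | hkj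
    · simp only [Pi.smul_apply, ne_eq, not_false_eq_true, Pi.single_eq_of_ne, smul_eq_mul, mul_zero,
        Function.update_self, Function.update_of_ne, Pi.sub_apply, sub_neg_eq_add, neg_add_rev, hki,
        hij]
      ring
    · simp [*]

theorem quarterTurn_mulVec_single (hij : i ≠ j) :
    quarterTurn 𝕜 i j *ᵥ Pi.single i 1 = Pi.single j 1 := by
  rw [quarterTurn_mulVec hij]
  ext k
  rcases eq_or_ne k j with rfl | hkj
  · simp
  · rcases eq_or_ne k i with rfl | hki <;> simp [*]

end CommRing

section OrderedField

variable [Field 𝕜] [LinearOrder 𝕜] [IsStrictOrderedRing 𝕜] [Nontrivial ι]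

theorem eq_top_of_quarterTurn_mem {p : Submodule 𝕜 (ι → 𝕜)}
    (hp : ∀ i j, i ≠ j → ∀ v ∈ p, quarterTurn 𝕜 i j *ᵥ v ∈ p) (hne : p ≠ ⊥) : p = ⊤ := by
  obtain ⟨v, hv, hv0⟩ := p.ne_bot_iff.mp hne
  obtain ⟨i, hi⟩ := Function.ne_iff.mp hv0
  have single_i_mem : Pi.single i 1 ∈ p := by
    obtain ⟨j, hji⟩ := exists_ne i
    have coeff_ne : 2 * (v i ^ 2 + v j ^ 2) ≠ 0 := by
      have : 0 < v i ^ 2 := sq_pos_of_ne_zero hi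
      positivity
    exact (p.smul_mem_iff coeff_ne).mp
      (smul_single_mem_of_quarterTurn_mem hji.symm (hp i j hji.symm) hv)
  have single_mem (j : ι) : Pi.single j 1 ∈ p := by
    rcases eq_or_ne i j with rfl | hij
    · exact single_i_mem
    · exact quarterTurn_mulVec_single (𝕜 := 𝕜) hij ▸ hp i j hij _ single_i_mem
  rw [eq_top_iff, ← (Pi.basisFun 𝕜 ι).span_eq, Submodule.span_le]
  rintro _ ⟨j, rfl⟩
  simpa using single_mem j

instance isIrreducible_rotationRep : (rotationRep ι 𝕜).IsIrreducible where
  exists_pair_ne := by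
    refine ⟨⊥, ⊤, fun h ↦ ?_⟩
    exact bot_ne_top (α := Submodule 𝕜 (ι → 𝕜)) (congrArg Subrepresentation.toSubmodule h)
  eq_bot_or_eq_top U := by
    refine or_iff_not_imp_left.mpr fun hU ↦ Subrepresentation.toSubmodule_injective ?_
    refine eq_top_of_quarterTurn_mem (fun i j hij v hv ↦ ?_)
      fun h ↦ hU (Subrepresentation.toSubmodule_injective h)
    exact U.apply_mem_toSubmodule ⟨_, quarterTurn_mem_specialOrthogonalGroup hij⟩ hv

theorem invariants_rotationRep : (rotationRep ι 𝕜).invariants = ⊥ := by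
  refine (Submodule.eq_bot_iff _).mpr fun v hv ↦ funext fun i ↦ ?_
  obtain ⟨j, hji⟩ := exists_ne i
  have fixed : quarterTurn 𝕜 i j *ᵥ v = v :=
    hv ⟨_, quarterTurn_mem_specialOrthogonalGroup hji.symm⟩
  rw [quarterTurn_mulVec hji.symm] at fixed
  have hi : -v j = v i := by simpa [hji.symm] using congrFun fixed i
  have hj : v i = v j := by simpa using congrFun fixed j
  simp only [Pi.zero_apply]
  linarith

end OrderedField

end Rotations

theorem IsConformalNewtonInvariant.isConformalInvariant
    {r : (Fin 3 → ℝ) × ℝ → (Fin 3 → ℝ) × ℝ → Prop} (h : IsConformalNewtonInvariant r) :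
    IsConformalInvariant ((rotationRep (Fin 3) ℝ).prod (.trivial ℝ _ ℝ)) r := by
  intro l hl S b p q hpq
  have hS : IsSO3 S.1 := S.2.imp_left (Matrix.mem_orthogonalGroup_iff' _ _).mp
  exact h l hl S hS b p q hpq

/-- Any nontrivial `C𝒢_N`-invariant equivalence relation on `ℝ³ × ℝ` which is not
the worldline relation `(x̄, t) ∼ (ȳ, s) ↔ x̄ = ȳ` is standard Newtonian
simultaneity `(x̄, t) ∼ (ȳ, s) ↔ t = s`. -/
theorem conformal_newton_invariant_is_simultaneity
    (r : ((Fin 3 → ℝ) × ℝ) → ((Fin 3 → ℝ) × ℝ) → Prop) (hr : Equivalence r)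
    (hinv : IsConformalNewtonInvariant r)
    (hnot_total : ¬ ∀ p q : (Fin 3 → ℝ) × ℝ, r p q)
    (hnot_id : ¬ ∀ p q : (Fin 3 → ℝ) × ℝ, r p q → p = q)
    (hnot_wl : ¬ ∀ p q : (Fin 3 → ℝ) × ℝ, (r p q ↔ p.1 = q.1)) :
    ∀ p q : (Fin 3 → ℝ) × ℝ, r p q ↔ p.2 = q.2 :=
  conformal_newton_invariant_is_simultaneity_general invariants_rotationRep hr
    hinv.isConformalInvariant hnot_total hnot_id hnot_wl
end

section
/- Let Λ be an additive subgroup of ℝ⁴ such that B(Λ) ⊆ Λ for every proper orthochronous Lorentz transformation B. Then Λ = {0} or Λ = ℝ⁴. -/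
noncomputable section

/-- Spacetime `ℝ⁴`, identified with `ℝ³ × ℝ`. -/
abbrev V4 : Type := (Fin 3 → ℝ) × ℝ

/-- The Minkowski form `g_c(x, y) = x̄ ⬝ ȳ - c² x⁴ y⁴`. -/
def mink (c : ℝ) (x y : V4) : ℝ := (∑ i, x.1 i * y.1 i) - c ^ 2 * x.2 * y.2

/-- A vector is future timelike if `g_c(u, u) < 0` and `u⁴ > 0`. -/
def FutureTimelike (c : ℝ) (u : V4) : Prop := mink c u u < 0 ∧ 0 < u.2

/-- A linear map is a Lorentz transformation if it preserves the Minkowski form. -/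
def IsLorentz (c : ℝ) (B : V4 →ₗ[ℝ] V4) : Prop :=
  ∀ x y : V4, mink c (B x) (B y) = mink c x y

/-- A linear map is orthochronous if it maps future timelike vectors to future
timelike vectors. -/
def IsOrthochronous (c : ℝ) (B : V4 →ₗ[ℝ] V4) : Prop :=
  ∀ u : V4, FutureTimelike c u → FutureTimelike c (B u)

/-- A linear map is proper if its determinant is 1. -/
def IsProper (B : V4 →ₗ[ℝ] V4) : Prop := LinearMap.det B = 1

/-!
For a null vector `n` and `e ⟂ n`, the null rotation `E_{n,e}` is an isometry fixing `n`. It is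
orthochronous because a timelike `x` is future timelike exactly when `g(n, x) < 0`, for `n` in the
future cone. It satisfies `E_{n,e} v + E_{n,-e} v - 2 v = -g(e, e) g(n, v) n`, so if `Λ` contains
`v` and `g(n, v) ≠ 0`, scaling a spacelike `e` puts the whole line `ℝ n` into `Λ`. Every vector
lies in the span of two null vectors, so a nonzero `v` is not orthogonal to all of them and `Λ`
contains some null line. Non-proportional null vectors are not orthogonal, so this line produces
all the other ones, and null lines generate the whole space.
-/

open LinearMap (BilinForm transvection)
open Module
open scoped Matrix

section EichlerTransformation

variable {R V : Type*} [CommRing R] [Invertible (2 : R)] [AddCommGroup V] [Module R V]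
  {B : BilinForm R V} {n e : V}

/-- The Eichler transformation (in Minkowski space, a null rotation)
`x ↦ x + B(n, x) e - (B(e, x) + B(e, e) B(n, x) / 2) n` attached to an isotropic vector `n` and a
vector `e` orthogonal to it. Writing it as a product of two transvections makes its determinant
evident. -/
def eichlerTransformation (B : BilinForm R V) (n e : V) : V →ₗ[R] V :=
  transvection (-(B e - (⅟2 * B e e) • B n)) n ∘ₗ transvection (B n) e

lemma eichlerTransformation_apply (hne : B n e = 0) (x : V) :
    eichlerTransformation B n e x = x + B n x • e - (B e x + ⅟2 * B e e * B n x) • n := by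
  simp only [eichlerTransformation, LinearMap.comp_apply, transvection.apply, LinearMap.neg_apply,
    LinearMap.sub_apply, LinearMap.smul_apply, map_add, map_smul, hne, smul_eq_mul]
  linear_combination (norm := module)
    (B e e * B n x) • congrArg (· • n) (invOf_mul_self (2 : R))

lemma eichlerTransformation_apply_self (hn : B n n = 0) (hne : B n e = 0) (hen : B e n = 0) :
    eichlerTransformation B n e n = n := by
  simp [eichlerTransformation_apply hne, hn, hen]

lemma apply_eichlerTransformation_eichlerTransformation (hB : B.IsSymm) (hn : B n n = 0)
    (hne : B n e = 0) (x y : V) :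
    B (eichlerTransformation B n e x) (eichlerTransformation B n e y) = B x y := by
  have hen : B e n = 0 := hB.eq e n ▸ hne
  simp only [eichlerTransformation_apply hne, map_add, map_sub, map_smul, LinearMap.add_apply,
    LinearMap.sub_apply, LinearMap.smul_apply, smul_eq_mul, hn, hne, hen, hB.eq x e, hB.eq x n]
  linear_combination (-(B e e * B n x * B n y)) * mul_invOf_self (2 : R)

lemma det_eichlerTransformation [Free R V] [Module.Finite R V] (hB : B.IsSymm) (hn : B n n = 0)
    (hne : B n e = 0) : LinearMap.det (eichlerTransformation B n e) = 1 := by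
  have hen : B e n = 0 := hB.eq e n ▸ hne
  simp [eichlerTransformation, LinearMap.det_comp, hn, hne, hen]

lemma eichlerTransformation_add_eichlerTransformation_neg (hne : B n e = 0) (x : V) :
    eichlerTransformation B n e x + eichlerTransformation B n (-e) x =
      x + x - (B e e * B n x) • n := by
  have hne' : B n (-e) = 0 := by simp [hne]
  rw [eichlerTransformation_apply hne, eichlerTransformation_apply hne']
  simp only [map_neg, LinearMap.neg_apply, neg_neg]
  linear_combination (norm := module)
    (-(B e e * B n x)) • congrArg (· • n) (mul_invOf_self (2 : R))

end EichlerTransformation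

lemma smul_mem_of_eichlerTransformation_mem {V : Type*} [AddCommGroup V] [Module ℝ V]
    {B : BilinForm ℝ V} {Λ : AddSubgroup V} {n e v : V} (hne : B n e = 0) (he : B e e ≠ 0)
    (hnv : B n v ≠ 0) (hv : v ∈ Λ)
    (hΛ : ∀ s : ℝ, eichlerTransformation B n (s • e) v ∈ Λ) (r : ℝ) : r • n ∈ Λ := by
  have sq_smul_mem (s : ℝ) : (s ^ 2 * (B e e * B n v)) • n ∈ Λ := by
    have hdiff := Λ.sub_mem (Λ.add_mem hv hv) (Λ.add_mem (hΛ s) (hΛ (-s)))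
    have hns : B n (s • e) = 0 := by simp [hne]
    rw [neg_smul, eichlerTransformation_add_eichlerTransformation_neg hns] at hdiff
    convert hdiff using 1
    simp only [map_smul, LinearMap.smul_apply, smul_eq_mul]
    module
  have hk : B e e * B n v ≠ 0 := mul_ne_zero he hnv
  rcases le_total 0 (r / (B e e * B n v)) with hr | hr
  · simpa [Real.sq_sqrt hr, hk] using sq_smul_mem √(r / (B e e * B n v))
  · simpa [Real.sq_sqrt (neg_nonneg.2 hr), hk] using
      Λ.neg_mem (sq_smul_mem √(-(r / (B e e * B n v))))

section DotProduct

variable {ι : Type*} [Fintype ι]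

lemma exists_dotProduct_self_eq_one_and_eq_smul [Nonempty ι] (v : ι → ℝ) :
    ∃ (u : ι → ℝ) (r : ℝ), u ⬝ᵥ u = 1 ∧ v = r • u := by
  classical
  rcases eq_or_ne v 0 with rfl | hv
  · exact ⟨Pi.single (Classical.arbitrary ι) 1, 0, by simp, by simp⟩
  · have hpos : 0 < v ⬝ᵥ v := Matrix.dotProduct_self_star_pos_iff.2 hv
    have hsqrt : √(v ⬝ᵥ v) ≠ 0 := (Real.sqrt_pos.2 hpos).ne'
    refine ⟨(√(v ⬝ᵥ v))⁻¹ • v, √(v ⬝ᵥ v), ?_, (smul_inv_smul₀ hsqrt v).symm⟩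
    simp only [smul_dotProduct, dotProduct_smul, smul_eq_mul]
    field_simp
    exact (Real.sq_sqrt hpos.le).symm

lemma dotProduct_eq_one_iff_of_dotProduct_self_eq_one {u w : ι → ℝ} (hu : u ⬝ᵥ u = 1)
    (hw : w ⬝ᵥ w = 1) : u ⬝ᵥ w = 1 ↔ u = w := by
  rw [← sub_eq_zero (a := u), ← dotProduct_self_eq_zero]
  simp only [sub_dotProduct, dotProduct_sub, hu, hw, dotProduct_comm w u]
  constructor <;> intro h <;> linarith

lemma sq_dotProduct_le (v w : ι → ℝ) : (v ⬝ᵥ w) ^ 2 ≤ (v ⬝ᵥ v) * (w ⬝ᵥ w) := by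
  simpa only [dotProduct, sq] using Finset.sum_mul_sq_le_sq_mul_sq Finset.univ v w

end DotProduct

section Minkowski

variable {ι : Type*} [Fintype ι] {c : ℝ}

/-- The Minkowski form `x̄ ⬝ ȳ - c² x₀ y₀` on `ℝ^ι × ℝ`, the time coordinate `x₀` being the second
component; for `ι = Fin 3` it is definitionally `mink c`. -/
def minkowskiForm (c : ℝ) : BilinForm ℝ ((ι → ℝ) × ℝ) :=
  LinearMap.mk₂ ℝ (fun x y ↦ x.1 ⬝ᵥ y.1 - c ^ 2 * x.2 * y.2)
    (fun x y z ↦ by simp only [Prod.fst_add, Prod.snd_add, add_dotProduct]; ring)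
    (fun r x y ↦ by simp only [Prod.smul_fst, Prod.smul_snd, smul_dotProduct, smul_eq_mul]; ring)
    (fun x y z ↦ by simp only [Prod.fst_add, Prod.snd_add, dotProduct_add]; ring)
    (fun r x y ↦ by simp only [Prod.smul_fst, Prod.smul_snd, dotProduct_smul, smul_eq_mul]; ring)

lemma minkowskiForm_apply (x y : (ι → ℝ) × ℝ) :
    minkowskiForm c x y = x.1 ⬝ᵥ y.1 - c ^ 2 * x.2 * y.2 :=
  rfl

lemma isSymm_minkowskiForm : (minkowskiForm c : BilinForm ℝ ((ι → ℝ) × ℝ)).IsSymm where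
  eq x y := by simp only [minkowskiForm_apply, dotProduct_comm x.1]; ring

/-- Future timelike vectors of `ℝ^ι × ℝ`; for `ι = Fin 3` this is definitionally
`FutureTimelike c`. -/
def IsFutureTimelike (c : ℝ) (x : (ι → ℝ) × ℝ) : Prop :=
  minkowskiForm c x x < 0 ∧ 0 < x.2

/-- The null vector with spatial direction `u`, normalized to have time coordinate `1`. It is null
when `u` is a unit vector. -/
def lightVector (c : ℝ) (u : ι → ℝ) : (ι → ℝ) × ℝ :=
  (c • u, 1)

lemma minkowskiForm_lightVector_left (u : ι → ℝ) (x : (ι → ℝ) × ℝ) :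
    minkowskiForm c (lightVector c u) x = c * (u ⬝ᵥ x.1) - c ^ 2 * x.2 := by
  simp [minkowskiForm_apply, lightVector]

lemma minkowskiForm_lightVector_lightVector (u w : ι → ℝ) :
    minkowskiForm c (lightVector c u) (lightVector c w) = c ^ 2 * (u ⬝ᵥ w - 1) := by
  rw [minkowskiForm_lightVector_left]
  simp only [lightVector, dotProduct_smul, smul_eq_mul]
  ring

lemma minkowskiForm_lightVector_self {u : ι → ℝ} (hu : u ⬝ᵥ u = 1) :
    minkowskiForm c (lightVector c u) (lightVector c u) = 0 := by
  simp [minkowskiForm_lightVector_lightVector, hu]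

lemma minkowskiForm_lightVector_ne_zero (hc : c ≠ 0) {u w : ι → ℝ} (hu : u ⬝ᵥ u = 1)
    (hw : w ⬝ᵥ w = 1) (huw : u ≠ w) :
    minkowskiForm c (lightVector c u) (lightVector c w) ≠ 0 := by
  rw [minkowskiForm_lightVector_lightVector]
  exact mul_ne_zero (pow_ne_zero 2 hc)
    (sub_ne_zero.2 (mt (dotProduct_eq_one_iff_of_dotProduct_self_eq_one hu hw).1 huw))

lemma exists_spacelike_orthogonal_lightVector [Nontrivial ι] (c : ℝ) (u : ι → ℝ) :
    ∃ e, minkowskiForm c (lightVector c u) e = 0 ∧ 0 < minkowskiForm c e e := by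
  obtain ⟨w, hw, huw⟩ := exists_ne_zero_dotProduct_eq_zero u
  refine ⟨(w, 0), ?_, ?_⟩
  · simp [minkowskiForm_lightVector_left, dotProduct_comm u, huw]
  · simpa [minkowskiForm_apply] using Matrix.dotProduct_self_star_pos_iff.2 hw

lemma exists_eq_smul_lightVector_add_smul_lightVector_neg [Nonempty ι] (hc : c ≠ 0)
    (x : (ι → ℝ) × ℝ) :
    ∃ (u : ι → ℝ) (a b : ℝ), u ⬝ᵥ u = 1 ∧ x = a • lightVector c u + b • lightVector c (-u) := by
  obtain ⟨u, r, hu, hr⟩ := exists_dotProduct_self_eq_one_and_eq_smul x.1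
  refine ⟨u, (x.2 + r / c) / 2, (x.2 - r / c) / 2, hu, Prod.ext ?_ ?_⟩
  · simp only [hr, lightVector, Prod.fst_add, Prod.smul_fst, smul_neg, smul_smul, ← sub_eq_add_neg,
      ← sub_smul]
    congr 1
    field_simp
    ring
  · simp only [lightVector, Prod.snd_add, Prod.smul_snd, smul_eq_mul]
    ring

lemma exists_minkowskiForm_lightVector_ne_zero [Nonempty ι] (hc : c ≠ 0) {x : (ι → ℝ) × ℝ}
    (hx : x ≠ 0) : ∃ u : ι → ℝ, u ⬝ᵥ u = 1 ∧ minkowskiForm c (lightVector c u) x ≠ 0 := by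
  by_contra! horth
  obtain ⟨u, a, b, hu, rfl⟩ := exists_eq_smul_lightVector_add_smul_lightVector_neg hc x
  have hu' : -u ⬝ᵥ -u = 1 := by simpa using hu
  have hpos := horth u hu
  have hneg := horth (-u) hu'
  simp only [map_add, map_smul, minkowskiForm_lightVector_lightVector, neg_dotProduct,
    dotProduct_neg, hu, smul_eq_mul] at hpos hneg
  have hb : b = 0 := by
    have : c ^ 2 * b = 0 := by linarith
    simpa [hc] using this
  have ha : a = 0 := by
    have : c ^ 2 * a = 0 := by linarith
    simpa [hc] using this
  simp [ha, hb] at hx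

lemma isFutureTimelike_iff_minkowskiForm_lightVector_neg (hc : c ≠ 0) {u : ι → ℝ}
    (hu : u ⬝ᵥ u = 1) (x : (ι → ℝ) × ℝ) :
    IsFutureTimelike c x ↔
      minkowskiForm c x x < 0 ∧ minkowskiForm c (lightVector c u) x < 0 := by
  refine and_congr_right fun hx ↦ ?_
  rw [minkowskiForm_apply] at hx
  rw [minkowskiForm_lightVector_left]
  have hc2 : 0 < c ^ 2 := by positivity
  have hcs : (u ⬝ᵥ x.1) ^ 2 ≤ x.1 ⬝ᵥ x.1 := by simpa [hu] using sq_dotProduct_le u x.1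
  have habs : |c * (u ⬝ᵥ x.1)| < |c ^ 2 * x.2| := sq_lt_sq.1 <| calc
    (c * (u ⬝ᵥ x.1)) ^ 2 = c ^ 2 * (u ⬝ᵥ x.1) ^ 2 := by ring
    _ ≤ c ^ 2 * (x.1 ⬝ᵥ x.1) := by gcongr
    _ < c ^ 2 * (c ^ 2 * x.2 * x.2) := by gcongr; linarith
    _ = (c ^ 2 * x.2) ^ 2 := by ring
  rw [← mul_pos_iff_of_pos_left hc2]
  grind

lemma IsFutureTimelike.map_of_lightVector_fixed (hc : c ≠ 0) {u : ι → ℝ} (hu : u ⬝ᵥ u = 1)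
    {B : (ι → ℝ) × ℝ →ₗ[ℝ] (ι → ℝ) × ℝ}
    (hB : ∀ x y, minkowskiForm c (B x) (B y) = minkowskiForm c x y)
    (hBu : B (lightVector c u) = lightVector c u) {x : (ι → ℝ) × ℝ} (hx : IsFutureTimelike c x) :
    IsFutureTimelike c (B x) := by
  have hlight : minkowskiForm c (lightVector c u) (B x) = minkowskiForm c (lightVector c u) x := by
    conv_lhs => rw [← hBu, hB]
  rw [isFutureTimelike_iff_minkowskiForm_lightVector_neg hc hu] at hx ⊢
  rwa [hB, hlight]

end Minkowski

section InvariantSubgroup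

variable {ι : Type*} [Fintype ι] [Nontrivial ι] {c : ℝ} {Λ : AddSubgroup ((ι → ℝ) × ℝ)}

lemma smul_lightVector_mem {u : ι → ℝ}
    (hΛ : ∀ e, minkowskiForm c (lightVector c u) e = 0 →
      ∀ v ∈ Λ, eichlerTransformation (minkowskiForm c) (lightVector c u) e v ∈ Λ)
    {v : (ι → ℝ) × ℝ} (hv : v ∈ Λ) (huv : minkowskiForm c (lightVector c u) v ≠ 0) (r : ℝ) :
    r • lightVector c u ∈ Λ := by
  obtain ⟨e, hue, he⟩ := exists_spacelike_orthogonal_lightVector c u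
  exact smul_mem_of_eichlerTransformation_mem hue he.ne' huv hv
    (fun s ↦ hΛ (s • e) (by simp [hue]) v hv) r

theorem eq_bot_or_eq_top_of_eichlerTransformation_mem (hc : c ≠ 0)
    (hΛ : ∀ u : ι → ℝ, u ⬝ᵥ u = 1 → ∀ e, minkowskiForm c (lightVector c u) e = 0 →
      ∀ v ∈ Λ, eichlerTransformation (minkowskiForm c) (lightVector c u) e v ∈ Λ) :
    Λ = ⊥ ∨ Λ = ⊤ := by
  refine Λ.bot_or_exists_ne_zero.imp_right fun ⟨v, hv, hv0⟩ ↦ ?_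
  obtain ⟨u, hu, huv⟩ := exists_minkowskiForm_lightVector_ne_zero hc hv0
  have hline_u : ∀ r : ℝ, r • lightVector c u ∈ Λ := smul_lightVector_mem (hΛ u hu) hv huv
  have hline (w : ι → ℝ) (hw : w ⬝ᵥ w = 1) (r : ℝ) : r • lightVector c w ∈ Λ := by
    rcases eq_or_ne w u with rfl | hwu
    · exact hline_u r
    · exact smul_lightVector_mem (hΛ w hw) (by simpa using hline_u 1)
        (minkowskiForm_lightVector_ne_zero hc hw hu hwu) r
  refine (AddSubgroup.eq_top_iff' Λ).2 fun x ↦ ?_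
  obtain ⟨w, a, b, hw, rfl⟩ := exists_eq_smul_lightVector_add_smul_lightVector_neg hc x
  exact Λ.add_mem (hline w hw a) (hline (-w) (by simpa using hw) b)

end InvariantSubgroup

theorem lorentz_invariant_addSubgroup_trivial_general {ι : Type*} [Fintype ι] [Nontrivial ι]
    (c : ℝ) (hc : c ≠ 0) (Λ : AddSubgroup ((ι → ℝ) × ℝ))
    (hΛ : ∀ B : (ι → ℝ) × ℝ →ₗ[ℝ] (ι → ℝ) × ℝ,
      (∀ x y, minkowskiForm c (B x) (B y) = minkowskiForm c x y) →
      (∀ u, IsFutureTimelike c u → IsFutureTimelike c (B u)) → LinearMap.det B = 1 →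
      ∀ v ∈ Λ, B v ∈ Λ) :
    Λ = ⊥ ∨ Λ = ⊤ := by
  refine eq_bot_or_eq_top_of_eichlerTransformation_mem hc fun u hu e hue ↦ ?_
  have hnull := minkowskiForm_lightVector_self (c := c) hu
  have hisom :=
    apply_eichlerTransformation_eichlerTransformation isSymm_minkowskiForm hnull hue
  have hfix := eichlerTransformation_apply_self hnull hue ((isSymm_minkowskiForm.eq _ _).trans hue)
  exact hΛ _ hisom (fun _ ↦ IsFutureTimelike.map_of_lightVector_fixed hc hu hisom hfix)
    (det_eichlerTransformation isSymm_minkowskiForm hnull hue)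

/-- An additive subgroup of `ℝ⁴` invariant under every proper orthochronous Lorentz
transformation is `{0}` or all of `ℝ⁴`. -/
theorem lorentz_invariant_addSubgroup_trivial (c : ℝ) (hc : 0 < c)
    (Λ : AddSubgroup V4)
    (hΛ : ∀ B : V4 →ₗ[ℝ] V4, IsLorentz c B → IsOrthochronous c B → IsProper B →
      ∀ v ∈ Λ, B v ∈ Λ) :
    Λ = ⊥ ∨ Λ = ⊤ := by
  exact lorentz_invariant_addSubgroup_trivial_general c hc.ne' Λ hΛ
end
end

section
/- Every equivalence relation on ℝ⁴ that is invariant under the proper orthochronous Poincaré group 𝒫↑⁺ is trivial, i.e., it is either the identity relation or the total relation. -/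
noncomputable section

/-!
By translation invariance, the relation is determined by the class `H` of `0`, an additive subgroup
stable under proper orthochronous Lorentz transformations. For a null vector `n` and a spacelike
vector `w` orthogonal to it, let `S w` be the associated null rotation. The terms linear in `w`
cancel in `S (s • w) v + S (-s • w) v - 2 • v`, which leaves a multiple of `n` proportional to
`s ^ 2 * g(n, v)`. Hence `H` contains the whole line `ℝ n` as soon as it contains some `v` not
orthogonal to `n`. Non-proportional null vectors are never orthogonal, so one such line in `H`
forces all the others into `H`, and the null lines span.

Null rotations preserve time orientation because they preserve `g(n, ·)`, whose sign tells future
from past among timelike vectors.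
-/

open LinearMap (BilinForm transvection)

section TranslationInvariant

variable {G : Type*} [AddCommSemigroup G]

/-- A translation-invariant equivalence relation, as an additive congruence. -/
def addConOfTranslationInvariant (r : G → G → Prop) (hr : Equivalence r)
    (hadd : ∀ b p q : G, r p q → r (p + b) (q + b)) : AddCon G where
  r := r
  iseqv := hr
  add' := fun {a b c d} hab hcd => hr.trans (hadd c a b hab) <| by
    simpa only [add_comm b] using hadd b c d hcd

end TranslationInvariant

section SiegelTransformation

variable {K V : Type*} [Field K] [AddCommGroup V] [Module K V]

/-- The Siegel transformation (null rotation) attached to a null vector `n` and a vector `w`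
orthogonal to `n`. It is written as a product of two transvections, so that its determinant is
visibly `1`; `siegelTransformation_apply` is the usual formula. -/
def siegelTransformation (B : BilinForm K V) (n w : V) : V →ₗ[K] V :=
  transvection ((B w w / 2) • B n - B w) n ∘ₗ transvection (B n) w

variable {B : BilinForm K V} {n w : V}

theorem det_siegelTransformation [FiniteDimensional K V] (hB : B.IsSymm) (hn : B n n = 0)
    (hnw : B n w = 0) : LinearMap.det (siegelTransformation B n w) = 1 := by
  have hwn : B w n = 0 := by rw [hB.eq, hnw]
  simp [siegelTransformation, LinearMap.det_comp, hn, hnw, hwn]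

variable [NeZero (2 : K)]

theorem siegelTransformation_apply (hnw : B n w = 0) (x : V) :
    siegelTransformation B n w x = x + B n x • w - (B w x + B w w / 2 * B n x) • n := by
  have h2 : (2 : K) ≠ 0 := two_ne_zero
  simp only [siegelTransformation, LinearMap.comp_apply, transvection.apply, LinearMap.sub_apply,
    LinearMap.smul_apply, map_add, map_smul, smul_eq_mul, hnw]
  match_scalars <;> field_simp
  ring

theorem apply_siegelTransformation_left (hn : B n n = 0) (hnw : B n w = 0) (x : V) :
    B n (siegelTransformation B n w x) = B n x := by
  simp [siegelTransformation_apply hnw, hn, hnw]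

theorem siegelTransformation_isometry (hB : B.IsSymm) (hn : B n n = 0) (hnw : B n w = 0)
    (x y : V) : B (siegelTransformation B n w x) (siegelTransformation B n w y) = B x y := by
  have hwn : B w n = 0 := by rw [hB.eq, hnw]
  have h2 : (2 : K) ≠ 0 := two_ne_zero
  simp only [siegelTransformation_apply hnw, map_add, map_sub, map_smul, LinearMap.add_apply,
    LinearMap.sub_apply, LinearMap.smul_apply, smul_eq_mul, hn, hnw, hwn, hB.eq x n, hB.eq x w]
  field_simp
  ring

theorem siegelTransformation_smul_add_neg_smul (hnw : B n w = 0) (s : K) (x : V) :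
    siegelTransformation B n (s • w) x + siegelTransformation B n (-s • w) x =
      (2 : K) • x - (s ^ 2 * (B w w * B n x)) • n := by
  have h2 : (2 : K) ≠ 0 := two_ne_zero
  have hs (t : K) : B n (t • w) = 0 := by rw [map_smul, hnw, smul_zero]
  rw [siegelTransformation_apply (hs s), siegelTransformation_apply (hs (-s))]
  simp only [map_smul, LinearMap.smul_apply, smul_eq_mul]
  match_scalars <;> field_simp <;> ring

theorem smul_mem_of_siegelTransformation_mem {H : AddSubgroup V} (hnw : B n w = 0)
    (hw : B w w ≠ 0) {v : V} (hv : v ∈ H) (hnv : B n v ≠ 0)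
    (hH : ∀ s : K, siegelTransformation B n (s • w) v ∈ H) (t : K) : t • n ∈ H := by
  set k := B w w * B n v
  have hk : k ≠ 0 := mul_ne_zero hw hnv
  have h2 : (2 : K) ≠ 0 := two_ne_zero
  have hsq (s : K) : (s ^ 2 * k) • n ∈ H := by
    have hsum := H.sub_mem (H.add_mem hv hv) (H.add_mem (hH s) (hH (-s)))
    rwa [siegelTransformation_smul_add_neg_smul hnw, two_smul, sub_sub_cancel] at hsum
  -- Away from characteristic two, every scalar is a difference of two squares.
  have hdiff : t = ((t / k + 1) / 2) ^ 2 * k - ((t / k - 1) / 2) ^ 2 * k := by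
    field_simp
    ring
  rw [hdiff, sub_smul]
  exact H.sub_mem (hsq _) (hsq _)

theorem addSubgroup_eq_bot_or_eq_top_of_siegelTransformation_mem {N : Set V} {H : AddSubgroup V}
    (hB : B.SeparatingRight) (hspan : Submodule.span K N = ⊤)
    (hN : N.Pairwise fun m n => B m n ≠ 0)
    (hH : ∀ n ∈ N, ∃ w, B n w = 0 ∧ B w w ≠ 0 ∧
      ∀ s : K, ∀ v ∈ H, siegelTransformation B n (s • w) v ∈ H) :
    H = ⊥ ∨ H = ⊤ := by
  have hline {n v : V} (hn : n ∈ N) (hv : v ∈ H) (hnv : B n v ≠ 0) (t : K) : t • n ∈ H := by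
    obtain ⟨w, hnw, hw, hwH⟩ := hH n hn
    exact smul_mem_of_siegelTransformation_mem hnw hw hv hnv (fun s => hwH s v hv) t
  refine H.bot_or_exists_ne_zero.imp_right ?_
  rintro ⟨v, hv, hv0⟩
  obtain ⟨n, hn, hnv⟩ : ∃ n ∈ N, B n v ≠ 0 := by
    by_contra! hcon
    have hflip : B.flip v = 0 := LinearMap.ext_on hspan hcon
    exact hv0 (hB v fun x => LinearMap.congr_fun hflip x)
  have hlines {m : V} (hm : m ∈ N) (t : K) : t • m ∈ H := by
    obtain rfl | hmn := eq_or_ne m n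
    · exact hline hm hv hnv t
    · exact hline hm (by simpa using hline hn hv hnv 1) (hN hm hn hmn) t
  refine (AddSubgroup.eq_top_iff' H).2 fun x => ?_
  exact Submodule.closure_induction (p := fun y _ => y ∈ H) H.zero_mem
    (fun _ _ _ _ => H.add_mem) (fun t _ hm => hlines hm t) (hspan ▸ Submodule.mem_top : x ∈ _)

end SiegelTransformation

section Minkowski

/-- The Minkowski form `mink` as a bilinear form, to which Siegel transformations apply. -/
def minkForm (c : ℝ) : BilinForm ℝ V4 :=
  (dotProductBilin ℝ ℝ).compl₁₂ (LinearMap.fst ℝ _ _) (LinearMap.fst ℝ _ _) -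
    c ^ 2 • (LinearMap.mul ℝ ℝ).compl₁₂ (LinearMap.snd ℝ _ _) (LinearMap.snd ℝ _ _)

/-- The future null vectors `(±c eᵢ, 1)` along the coordinate axes: a spanning set of null
directions. -/
def axialNullVectors (c : ℝ) : Set V4 :=
  {n | ∃ (i : Fin 3) (a : ℝ), a ^ 2 = c ^ 2 ∧ n = (Pi.single i a, 1)}

variable {c : ℝ} {n w : V4}

theorem minkForm_apply (x y : V4) : minkForm c x y = mink c x y := by
  simp [minkForm, mink, dotProduct, mul_assoc]

theorem minkForm_isSymm : (minkForm c).IsSymm :=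
  ⟨fun x y => by simp [minkForm, dotProduct_comm, mul_comm]⟩

theorem minkForm_single_left (i : Fin 3) (a t : ℝ) (x : V4) :
    minkForm c (Pi.single i a, t) x = a * x.1 i - c ^ 2 * (t * x.2) := by
  simp [minkForm]

theorem minkForm_separatingRight (hc : c ≠ 0) : (minkForm c).SeparatingRight := by
  refine fun x hx => Prod.ext (funext fun i => ?_) ?_
  · simpa [minkForm_single_left] using hx (Pi.single i 1, 0)
  · simpa [minkForm, hc] using hx (0, 1)

theorem minkForm_self_of_mem_axialNullVectors (hn : n ∈ axialNullVectors c) :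
    minkForm c n n = 0 := by
  obtain ⟨i, a, ha, rfl⟩ := hn
  rw [minkForm_single_left]
  simp only [Pi.single_eq_same]
  linear_combination ha

theorem axialNullVectors_pairwise (hc : c ≠ 0) :
    (axialNullVectors c).Pairwise fun m n => minkForm c m n ≠ 0 := by
  rintro _ ⟨i, a, ha, rfl⟩ _ ⟨j, b, hb, rfl⟩ hne horth
  rw [minkForm_single_left] at horth
  obtain rfl | hij := eq_or_ne i j
  · simp only [Pi.single_eq_same] at horth
    have hab : (a - b) ^ 2 = 0 := by linear_combination ha + hb - 2 * horth
    exact hne (by rw [sub_eq_zero.1 (pow_eq_zero_iff two_ne_zero |>.1 hab)])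
  · exact hc (by simpa [hij] using horth)

theorem span_axialNullVectors (hc : c ≠ 0) : Submodule.span ℝ (axialNullVectors c) = ⊤ := by
  have hpos (i : Fin 3) : (Pi.single i c, 1) ∈ Submodule.span ℝ (axialNullVectors c) :=
    Submodule.subset_span ⟨i, c, rfl, rfl⟩
  have hneg (i : Fin 3) : (Pi.single i (-c), 1) ∈ Submodule.span ℝ (axialNullVectors c) :=
    Submodule.subset_span ⟨i, -c, neg_sq c, rfl⟩
  refine Submodule.eq_top_iff'.2 fun x => ?_
  have hx : x = ∑ i, (x.1 i / (2 * c)) • ((Pi.single i c, 1) - (Pi.single i (-c), 1) : V4) +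
      (x.2 / 2) • ((Pi.single 0 c, 1) + (Pi.single 0 (-c), 1) : V4) := by
    refine Prod.ext (funext fun k => ?_) ?_
    · fin_cases k <;> simp [Fin.sum_univ_three] <;> field_simp <;> ring
    · simp [Fin.sum_univ_three, one_add_one_eq_two]
  rw [hx]
  exact add_mem (sum_mem fun i _ => Submodule.smul_mem _ _ (sub_mem (hpos i) (hneg i)))
    (Submodule.smul_mem _ _ (add_mem (hpos 0) (hneg 0)))

theorem exists_unit_orthogonal_of_mem_axialNullVectors (hn : n ∈ axialNullVectors c) :
    ∃ w : V4, minkForm c n w = 0 ∧ minkForm c w w = 1 := by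
  obtain ⟨i, a, -, rfl⟩ := hn
  obtain ⟨j, hji⟩ := exists_ne i
  exact ⟨(Pi.single j 1, 0), by simp [minkForm_single_left, hji.symm],
    by simp [minkForm_single_left]⟩

theorem snd_pos_iff_minkForm_axialNullVector_neg (hc : c ≠ 0) {u : V4}
    (hn : n ∈ axialNullVectors c) (hu : mink c u u < 0) : 0 < u.2 ↔ minkForm c n u < 0 := by
  obtain ⟨i, a, ha, rfl⟩ := hn
  have hc2 : 0 < c ^ 2 := by positivity
  have hsq : (a * u.1 i) ^ 2 < (c ^ 2 * u.2) ^ 2 := by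
    have hi : u.1 i * u.1 i ≤ ∑ k, u.1 k * u.1 k :=
      Finset.single_le_sum (f := fun k => u.1 k * u.1 k)
        (fun k _ => mul_self_nonneg _) (Finset.mem_univ i)
    have hlt : u.1 i ^ 2 < c ^ 2 * u.2 ^ 2 := by
      unfold mink at hu
      linarith
    calc (a * u.1 i) ^ 2 = c ^ 2 * u.1 i ^ 2 := by rw [mul_pow, ha]
      _ < c ^ 2 * (c ^ 2 * u.2 ^ 2) := mul_lt_mul_of_pos_left hlt hc2
      _ = (c ^ 2 * u.2) ^ 2 := by ring
  have habs : |a * u.1 i| < |c ^ 2 * u.2| := sq_lt_sq.1 hsq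
  rw [minkForm_single_left, one_mul, sub_neg]
  constructor
  · intro hpos
    rw [abs_of_pos (mul_pos hc2 hpos)] at habs
    exact (le_abs_self _).trans_lt habs
  · intro hlt
    by_contra! hneg
    rw [abs_of_nonpos (mul_nonpos_of_nonneg_of_nonpos hc2.le hneg)] at habs
    linarith [neg_abs_le (a * u.1 i)]

theorem isLorentz_siegelTransformation (hn : minkForm c n n = 0) (hnw : minkForm c n w = 0) :
    IsLorentz c (siegelTransformation (minkForm c) n w) := fun x y => by
  simpa only [minkForm_apply] using siegelTransformation_isometry minkForm_isSymm hn hnw x y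

theorem isProper_siegelTransformation (hn : minkForm c n n = 0) (hnw : minkForm c n w = 0) :
    IsProper (siegelTransformation (minkForm c) n w) :=
  det_siegelTransformation minkForm_isSymm hn hnw

theorem isOrthochronous_siegelTransformation (hc : c ≠ 0) (hn : n ∈ axialNullVectors c)
    (hnw : minkForm c n w = 0) : IsOrthochronous c (siegelTransformation (minkForm c) n w) := by
  rintro u ⟨hu, hu_pos⟩
  have hnn := minkForm_self_of_mem_axialNullVectors hn
  have hSu := (isLorentz_siegelTransformation hnn hnw u u).trans_lt hu
  refine ⟨hSu, ?_⟩
  rwa [snd_pos_iff_minkForm_axialNullVector_neg hc hn hSu,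
    apply_siegelTransformation_left hnn hnw,
    ← snd_pos_iff_minkForm_axialNullVector_neg hc hn hu]

theorem addSubgroup_eq_bot_or_eq_top_of_lorentz_invariant (hc : c ≠ 0) {H : AddSubgroup V4}
    (hH : ∀ B : V4 →ₗ[ℝ] V4, IsLorentz c B → IsOrthochronous c B → IsProper B →
      ∀ v ∈ H, B v ∈ H) : H = ⊥ ∨ H = ⊤ := by
  refine addSubgroup_eq_bot_or_eq_top_of_siegelTransformation_mem (minkForm_separatingRight hc)
    (span_axialNullVectors hc) (axialNullVectors_pairwise hc) fun n hn => ?_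
  obtain ⟨w, hnw, hw⟩ := exists_unit_orthogonal_of_mem_axialNullVectors hn
  refine ⟨w, hnw, by rw [hw]; exact one_ne_zero, fun s => ?_⟩
  have hnn := minkForm_self_of_mem_axialNullVectors hn
  have hnsw : minkForm c n (s • w) = 0 := by rw [map_smul, hnw, smul_zero]
  exact hH _ (isLorentz_siegelTransformation hnn hnsw)
    (isOrthochronous_siegelTransformation hc hn hnsw) (isProper_siegelTransformation hnn hnsw)

end Minkowski

/-- Every equivalence relation on `ℝ⁴` invariant under the proper orthochronous
Poincaré group (all maps `x ↦ Bx + b` with `B` a proper orthochronous Lorentz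
transformation) is trivial: it is the identity relation or the total relation. -/
theorem poincare_invariant_equivalence_trivial (c : ℝ) (hc : 0 < c)
    (r : V4 → V4 → Prop) (hr : Equivalence r)
    (hinv : ∀ B : V4 →ₗ[ℝ] V4, IsLorentz c B → IsOrthochronous c B → IsProper B →
      ∀ b : V4, ∀ p q : V4, r p q → r (B p + b) (B q + b)) :
    (∀ p q : V4, r p q ↔ p = q) ∨ (∀ p q : V4, r p q) := by
  let C := addConOfTranslationInvariant r hr
    (hinv LinearMap.id (fun _ _ => rfl) (fun _ h => h) LinearMap.det_id)
  have hC : ∀ B : V4 →ₗ[ℝ] V4, IsLorentz c B → IsOrthochronous c B → IsProper B →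
      ∀ v ∈ C.addSubgroup, B v ∈ C.addSubgroup := by
    intro B hL hO hP v hv
    have hBv : r (B v + 0) (B 0 + 0) := hinv B hL hO hP 0 v 0 hv
    rwa [map_zero, add_zero, add_zero] at hBv
  refine (addSubgroup_eq_bot_or_eq_top_of_lorentz_invariant hc.ne' hC).imp ?_ ?_
  · intro hbot p q
    refine ⟨fun hpq => ?_, fun hpq => hpq ▸ hr.refl p⟩
    have hsub : p - q ∈ C.addSubgroup := by simpa using C.sub hpq (C.refl q)
    rwa [hbot, AddSubgroup.mem_bot, sub_eq_zero] at hsub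
  · intro htop p q
    have hmem (x : V4) : x ∈ C.addSubgroup := htop ▸ AddSubgroup.mem_top x
    exact hr.trans (hmem p) (hr.symm (hmem q))
end
end

section
/- Let u₁ and u₂ be future timelike vectors in ℝ⁴ that are not proportional (there is no λ ∈ ℝ with u₂ = λ u₁). Then the join R_{u₁} ⊔ R_{u₂} in the lattice of equivalence relations on ℝ⁴, i.e., the smallest equivalence relation containing both R_{u₁} and R_{u₂}, is the total relation relating all pairs of points. -/
/-!
The classes of `R_u` are the cosets of the hyperplane `uᗮ`, so the join of `R_{u₁}` and `R_{u₂}` is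
the coset relation of `u₁ᗮ + u₂ᗮ`. As the Minkowski form is nondegenerate, non-proportional vectors
have distinct orthogonal hyperplanes, and two distinct hyperplanes span the whole space.
-/

noncomputable section

/-- The standard simultaneity relation determined by a future timelike vector `u`:
`x R_u y ↔ g_c(x - y, u) = 0`. -/
def Rstd (c : ℝ) (u : V4) (x y : V4) : Prop := mink c (x - y) u = 0

section CosetRelations

variable {R M : Type*} [Ring R] [AddCommGroup M] [Module R M]

theorem eqvGen_sub_mem_or_sub_mem_iff {p q : Submodule R M} {x y : M} :
    Relation.EqvGen (fun a b => a - b ∈ p ∨ a - b ∈ q) x y ↔ x - y ∈ p ⊔ q := by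
  constructor
  · intro h
    induction h with
    | rel a b hab =>
      exact hab.elim (Submodule.mem_sup_left ·) (Submodule.mem_sup_right ·)
    | refl a => simp
    | symm a b _ hab => exact sub_mem_comm_iff.mp hab
    | trans a b c _ _ hab hbc => exact sub_add_sub_cancel a b c ▸ add_mem hab hbc
  · intro h
    obtain ⟨v, hv, w, hw, hvw⟩ := Submodule.mem_sup.mp h
    have hx : x - (w + y) ∈ p := by rwa [← sub_sub, sub_right_comm, ← hvw, add_sub_cancel_right]
    have hy : w + y - y ∈ q := by rwa [add_sub_cancel_right]
    exact .trans _ (w + y) _ (.rel _ _ (.inl hx)) (.rel _ _ (.inr hy))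

end CosetRelations

section Hyperplanes

variable {K V W : Type*} [Field K] [AddCommGroup V] [Module K V] [AddCommGroup W] [Module K W]

theorem ker_sup_ker_eq_top_of_notMem_span_singleton {f g : Module.Dual K V}
    (h : g ∉ Submodule.span K {f}) : f.ker ⊔ g.ker = ⊤ := by
  have hle : ¬ f.ker ≤ g.ker := fun hle => h <| by
    simpa using mem_span_of_iInf_ker_le_ker (L := fun _ : Unit => f) (K := g) (by simpa using hle)
  have hg : g ≠ 0 := by
    rintro rfl
    exact h (zero_mem _)
  have hcoatom : IsCoatom g.ker := LinearMap.isCoatom_ker_of_surjective (g.surjective hg)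
  exact (hcoatom.not_le_iff_codisjoint.mp hle).symm.eq_top

theorem join_of_two_simultaneities_total_general {B : V →ₗ[K] W →ₗ[K] K} (hB : B.SeparatingRight)
    {u₁ u₂ : W} (hprop : ¬ ∃ l : K, u₂ = l • u₁) (x y : V) :
    Relation.EqvGen (fun a b => B (a - b) u₁ = 0 ∨ B (a - b) u₂ = 0) x y := by
  have hinj : Function.Injective B.flip :=
    LinearMap.ker_eq_bot.mp (LinearMap.separatingRight_iff_flip_ker_eq_bot.mp hB)
  have hspan : B.flip u₂ ∉ Submodule.span K {B.flip u₁} := by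
    rw [Submodule.mem_span_singleton]
    rintro ⟨l, hl⟩
    exact hprop ⟨l, hinj (by rw [map_smul, hl])⟩
  have hmem : x - y ∈ (B.flip u₁).ker ⊔ (B.flip u₂).ker :=
    ker_sup_ker_eq_top_of_notMem_span_singleton hspan ▸ Submodule.mem_top
  exact eqvGen_sub_mem_or_sub_mem_iff.mpr hmem

end Hyperplanes

/-- The Minkowski form `mink c` bundled as a bilinear form, which gives access to the library's
notion of nondegeneracy. -/
def minkBilin (c : ℝ) : LinearMap.BilinForm ℝ V4 :=
  LinearMap.mk₂ ℝ (mink c)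
    (fun x x' y => by
      simp only [mink, Prod.fst_add, Prod.snd_add, Pi.add_apply, add_mul, Finset.sum_add_distrib]
      ring)
    (fun a x y => by
      simp only [mink, Prod.smul_fst, Prod.smul_snd, Pi.smul_apply, smul_eq_mul, mul_assoc,
        ← Finset.mul_sum]
      ring)
    (fun x y y' => by
      simp only [mink, Prod.fst_add, Prod.snd_add, Pi.add_apply, mul_add, Finset.sum_add_distrib]
      ring)
    (fun a x y => by
      simp only [mink, Prod.smul_fst, Prod.smul_snd, Pi.smul_apply, smul_eq_mul,
        mul_left_comm _ a, ← Finset.mul_sum]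
      ring)

theorem minkBilin_separatingRight {c : ℝ} (hc : c ≠ 0) : (minkBilin c).SeparatingRight := by
  intro y hy
  have hspace (i : Fin 3) : y.1 i = 0 := by
    simpa [minkBilin, mink, Pi.single_apply] using hy (Pi.single i 1, 0)
  have htime : y.2 = 0 := by
    simpa [minkBilin, mink, hc] using hy (0, 1)
  exact Prod.ext (funext hspace) htime

/-- If `u₁` and `u₂` are non-proportional future timelike vectors, the join
`R_{u₁} ⊔ R_{u₂}` in the lattice of equivalence relations — i.e. the smallest
equivalence relation containing both, here realized as the equivalence relation
generated by their union — is the total relation. -/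
theorem join_of_two_simultaneities_total (c : ℝ) (hc : 0 < c) (u₁ u₂ : V4)
    (h₁ : FutureTimelike c u₁) (h₂ : FutureTimelike c u₂)
    (hprop : ¬ ∃ l : ℝ, u₂ = l • u₁) :
    ∀ x y : V4, Relation.EqvGen (fun a b => Rstd c u₁ a b ∨ Rstd c u₂ a b) x y :=
  join_of_two_simultaneities_total_general (minkBilin_separatingRight hc.ne') hprop
end
end

section
/- Let ∼ be a nontrivial 𝒢_N-invariant equivalence relation on ℝ³ × ℝ satisfying the causality condition, i.e., (x̄, t) ∼ (ȳ, s) implies t = s. Then ∼ is absolute simultaneity: (x̄, t) ∼ (ȳ, s) ⟺ t = s. (The same conclusion holds a fortiori for nontrivial 𝒢-invariant equivalence relations satisfying the causality condition, since 𝒢_N is a subgroup of the Galilei group 𝒢.) -/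
/-!
For a Euclidean-invariant equivalence relation, the differences `x - y` of related simultaneous
events form a rotation-invariant additive subgroup of space. Rotations act transitively on spheres,
so as soon as this subgroup contains a vector of norm `r > 0` it contains the whole sphere of
radius `r`. In dimension at least two every vector of norm at most `2 * r` is a sum of two vectors
of norm `r`. Hence the subgroup is open, and, space being connected, it is everything.
-/

open Module Metric Function
open scoped RealInnerProductSpace

section Rotations

variable {E : Type*} [NormedAddCommGroup E] [InnerProductSpace ℝ E]

/-- A rotation: a linear isometry of determinant one, that is, an element of the special orthogonal
group of `E`. The notion is meant for finite-dimensional `E`, as `LinearMap.det` is constantly `1`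
otherwise. -/
def IsRotation (f : E ≃ₗᵢ[ℝ] E) : Prop :=
  LinearMap.det f.toLinearMap = 1

theorem IsRotation.refl : IsRotation (.refl ℝ E) :=
  LinearMap.det_id

theorem exists_norm_eq_inner_eq_zero (hE : 1 < finrank ℝ E) (v : E) {c : ℝ} (hc : 0 ≤ c) :
    ∃ w : E, ‖w‖ = c ∧ ⟪v, w⟫ = 0 := by
  have : FiniteDimensional ℝ E := finite_of_finrank_pos (zero_lt_one.trans hE)
  have finrank_span_le : finrank ℝ (ℝ ∙ v) ≤ 1 := by
    simpa using finrank_span_le_card (R := ℝ) ({v} : Set E)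
  have span_ne_top : (ℝ ∙ v) ≠ ⊤ := by
    intro h
    rw [h, finrank_top] at finrank_span_le
    exact hE.not_ge finrank_span_le
  have : Nontrivial (ℝ ∙ v)ᗮ :=
    Submodule.nontrivial_iff_ne_bot.2 (mt Submodule.orthogonal_eq_bot_iff.1 span_ne_top)
  obtain ⟨w, hw⟩ := exists_norm_eq (ℝ ∙ v)ᗮ hc
  exact ⟨w, hw, Submodule.mem_orthogonal_singleton_iff_inner_right.1 w.2⟩

theorem isRotation_reflection_trans_reflection [FiniteDimensional ℝ E] {u v : E}
    (hu : u ≠ 0) (hv : v ≠ 0) :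
    IsRotation ((ℝ ∙ u)ᗮ.reflection.trans (ℝ ∙ v)ᗮ.reflection) := by
  have det_eq (w : E) (hw : w ≠ 0) : LinearMap.det (ℝ ∙ w)ᗮ.reflection.toLinearMap = -1 := by
    rw [Submodule.det_reflection, Submodule.orthogonal_orthogonal, finrank_span_singleton hw,
      pow_one]
  have det_comp := LinearMap.det_comp (ℝ ∙ v)ᗮ.reflection.toLinearMap
    (ℝ ∙ u)ᗮ.reflection.toLinearMap
  rw [det_eq u hu, det_eq v hv, neg_mul_neg, one_mul] at det_comp
  exact det_comp

theorem exists_isRotation_apply_eq (hE : 1 < finrank ℝ E) {v w : E} (hvw : ‖v‖ = ‖w‖) :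
    ∃ f : E ≃ₗᵢ[ℝ] E, IsRotation f ∧ f v = w := by
  have : FiniteDimensional ℝ E := finite_of_finrank_pos (zero_lt_one.trans hE)
  rcases eq_or_ne v w with rfl | hne
  · exact ⟨.refl ℝ E, .refl, rfl⟩
  -- The reflection exchanging `v` and `w` has determinant `-1`; precompose it with one fixing `v`.
  obtain ⟨u, hu, hvu⟩ := exists_norm_eq_inner_eq_zero hE v zero_le_one
  have hu0 : u ≠ 0 := norm_ne_zero_iff.1 (hu ▸ one_ne_zero)
  have fixes_v : (ℝ ∙ u)ᗮ.reflection v = v :=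
    Submodule.reflection_mem_subspace_eq_self
      (Submodule.mem_orthogonal_singleton_iff_inner_left.2 hvu)
  refine ⟨_, isRotation_reflection_trans_reflection hu0 (sub_ne_zero.2 hne), ?_⟩
  rw [LinearIsometryEquiv.trans_apply, fixes_v, Submodule.reflection_sub hvw]

theorem exists_add_eq_of_norm_le (hE : 1 < finrank ℝ E) {x : E} {r : ℝ} (hx : ‖x‖ ≤ 2 * r) :
    ∃ y z : E, ‖y‖ = r ∧ ‖z‖ = r ∧ y + z = x := by
  have hr : 0 ≤ r := by linarith [norm_nonneg x]
  have half_norm : ‖(2⁻¹ : ℝ) • x‖ = ‖x‖ / 2 := by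
    rw [norm_smul, Real.norm_of_nonneg (by norm_num), inv_mul_eq_div]
  have height_sq_nonneg : 0 ≤ r ^ 2 - (‖x‖ / 2) ^ 2 := by
    nlinarith [norm_nonneg x]
  -- `0`, `y`, `x`, `z` is a rhombus of side `r`, whose other diagonal has half-length `‖w‖`.
  obtain ⟨w, hw, hxw⟩ :=
    exists_norm_eq_inner_eq_zero hE ((2⁻¹ : ℝ) • x) (Real.sqrt_nonneg (r ^ 2 - (‖x‖ / 2) ^ 2))
  have side_sq : ‖(2⁻¹ : ℝ) • x‖ * ‖(2⁻¹ : ℝ) • x‖ + ‖w‖ * ‖w‖ = r * r := by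
    rw [half_norm, hw, Real.mul_self_sqrt height_sq_nonneg]
    ring
  refine ⟨(2⁻¹ : ℝ) • x + w, (2⁻¹ : ℝ) • x - w, ?_, ?_, by module⟩
  · rw [← mul_self_inj (norm_nonneg _) hr, norm_add_sq_eq_norm_sq_add_norm_sq_real hxw, side_sq]
  · rw [← mul_self_inj (norm_nonneg _) hr, norm_sub_sq_eq_norm_sq_add_norm_sq_real hxw, side_sq]

theorem addSubgroup_eq_top_of_isRotation_invariant (hE : 1 < finrank ℝ E) {H : AddSubgroup E}
    (hH : ∀ f : E ≃ₗᵢ[ℝ] E, IsRotation f → ∀ v ∈ H, f v ∈ H) (hne : H ≠ ⊥) : H = ⊤ := by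
  obtain ⟨v, hvH, hv⟩ := H.bot_or_exists_ne_zero.resolve_left hne
  have sphere_subset (y : E) (hy : ‖y‖ = ‖v‖) : y ∈ H := by
    obtain ⟨f, hf, rfl⟩ := exists_isRotation_apply_eq hE hy.symm
    exact hH f hf v hvH
  have ball_subset : ball 0 (2 * ‖v‖) ⊆ (H : Set E) := by
    intro x hx
    obtain ⟨y, z, hy, hz, rfl⟩ := exists_add_eq_of_norm_le hE (mem_ball_zero_iff.1 hx).le
    exact H.add_mem (sphere_subset y hy) (sphere_subset z hz)
  have isOpen : IsOpen (H : Set E) :=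
    H.isOpen_of_mem_nhds (Filter.mem_of_superset (ball_mem_nhds 0 (by positivity)) ball_subset)
  have isClopen : IsClopen (H : Set E) := ⟨H.isClosed_of_isOpen isOpen, isOpen⟩
  exact SetLike.coe_injective (isClopen.eq_univ ⟨0, H.zero_mem⟩)

end Rotations

section Spacetime

variable {E T : Type*} [NormedAddCommGroup E] [InnerProductSpace ℝ E] [AddGroup T]
  {r : E × T → E × T → Prop}

/-- Invariance of a relation on the spacetime with space `E` and time `T` under the rotations of
space and the translations of space and time: for `E = ℝ³` and `T = ℝ` this is the Newton group, in
a form that does not refer to coordinates. -/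
def IsEuclideanInvariant (r : E × T → E × T → Prop) : Prop :=
  ∀ f : E ≃ₗᵢ[ℝ] E, IsRotation f → ∀ b p q : E × T, r p q →
    r ((f p.1, p.2) + b) ((f q.1, q.2) + b)

namespace IsEuclideanInvariant

theorem add_right (hinv : IsEuclideanInvariant r) (b : E × T) {p q : E × T} (h : r p q) :
    r (p + b) (q + b) :=
  hinv (.refl ℝ E) .refl b p q h

/-- The group of spatial displacements between related simultaneous events. By translation
invariance it is enough to compare with the origin of spacetime. -/
def displacements (hinv : IsEuclideanInvariant r) (hr : Equivalence r) : AddSubgroup E where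
  carrier := {v | r (v, 0) (0, 0)}
  zero_mem' := hr.refl (0, 0)
  add_mem' {v w} hv hw := by
    have : r (v + w, 0) (w, 0) := by simpa using hinv.add_right (w, 0) hv
    exact hr.trans this hw
  neg_mem' {v} hv := by
    have : r (0, 0) (-v, 0) := by simpa using hinv.add_right (-v, 0) hv
    exact hr.symm this

theorem mem_displacements_iff (hinv : IsEuclideanInvariant r) (hr : Equivalence r) {v : E} :
    v ∈ hinv.displacements hr ↔ r (v, 0) (0, 0) :=
  Iff.rfl

theorem sub_mem_displacements_iff (hinv : IsEuclideanInvariant r) (hr : Equivalence r) {x y : E}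
    {t : T} : x - y ∈ hinv.displacements hr ↔ r (x, t) (y, t) := by
  rw [mem_displacements_iff]
  refine ⟨fun h => ?_, fun h => ?_⟩
  · simpa using hinv.add_right (y, t) h
  · simpa [sub_eq_add_neg] using hinv.add_right (-y, -t) h

theorem apply_mem_displacements (hinv : IsEuclideanInvariant r) (hr : Equivalence r)
    {f : E ≃ₗᵢ[ℝ] E} (hf : IsRotation f) {v : E} (hv : v ∈ hinv.displacements hr) :
    f v ∈ hinv.displacements hr := by
  rw [mem_displacements_iff] at hv ⊢
  simpa using hinv f hf 0 _ _ hv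

end IsEuclideanInvariant

theorem newton_causal_equivalence_is_absolute_simultaneity_general (hE : 1 < finrank ℝ E)
    (hr : Equivalence r) (hinv : IsEuclideanInvariant r) (hnot_id : ¬ ∀ p q, r p q → p = q)
    (hcausal : ∀ p q, r p q → p.2 = q.2) (p q : E × T) : r p q ↔ p.2 = q.2 := by
  have displacements_ne_bot : hinv.displacements hr ≠ ⊥ := by
    refine fun hbot => hnot_id ?_
    rintro ⟨x, t⟩ ⟨y, s⟩ h
    obtain rfl : t = s := hcausal _ _ h
    have : x - y = 0 := by simpa [hbot] using (hinv.sub_mem_displacements_iff hr).2 h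
    rw [sub_eq_zero.1 this]
  have displacements_eq_top : hinv.displacements hr = ⊤ :=
    addSubgroup_eq_top_of_isRotation_invariant hE
      (fun _ hf _ => hinv.apply_mem_displacements hr hf) displacements_ne_bot
  refine ⟨hcausal p q, fun h => ?_⟩
  obtain ⟨x, t⟩ := p
  obtain ⟨y, s⟩ := q
  obtain rfl : t = s := h
  exact (hinv.sub_mem_displacements_iff hr).1 (displacements_eq_top ▸ AddSubgroup.mem_top _)

end Spacetime

theorem IsRotation.isSO3_toMatrix {E : Type*} [NormedAddCommGroup E] [InnerProductSpace ℝ E]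
    {f : E ≃ₗᵢ[ℝ] E} (hf : IsRotation f) (b : OrthonormalBasis (Fin 3) ℝ E) :
    IsSO3 (LinearMap.toMatrix b.toBasis b.toBasis f.toLinearMap) :=
  ⟨(Matrix.mem_orthogonalGroup_iff' _ _).1 (f.toMatrix_mem_unitaryGroup b b),
    (LinearMap.det_toMatrix _ _).trans hf⟩

/-- The identification of spacetime whose space carries the Euclidean norm with spacetime in
coordinates, where `Fin 3 → ℝ` carries the supremum norm. -/
def euclideanSpacetimeEquiv : EuclideanSpace ℝ (Fin 3) × ℝ ≃ (Fin 3 → ℝ) × ℝ :=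
  (WithLp.equiv 2 (Fin 3 → ℝ)).prodCongr (.refl ℝ)

theorem IsNewtonInvariant.isEuclideanInvariant {r : (Fin 3 → ℝ) × ℝ → (Fin 3 → ℝ) × ℝ → Prop}
    (hinv : IsNewtonInvariant r) : IsEuclideanInvariant (r on euclideanSpacetimeEquiv) := by
  intro f hf b p q h
  let e := EuclideanSpace.basisFun (Fin 3) ℝ
  have mulVec_eq (x : EuclideanSpace ℝ (Fin 3)) :
      (LinearMap.toMatrix e.toBasis e.toBasis f.toLinearMap).mulVec x.ofLp = (f x).ofLp :=
    LinearMap.toMatrix_mulVec_repr e.toBasis e.toBasis f.toLinearMap x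
  have := hinv _ (hf.isSO3_toMatrix e) (euclideanSpacetimeEquiv b) _ _ h
  simpa [onFun, euclideanSpacetimeEquiv, Prod.map, mulVec_eq] using this

/-- A nontrivial Newton-invariant equivalence relation on `ℝ³ × ℝ` satisfying the
causality condition (related events have equal time coordinates) is absolute
simultaneity: `(x̄, t) ∼ (ȳ, s) ↔ t = s`. -/
theorem newton_causal_equivalence_is_absolute_simultaneity
    (r : ((Fin 3 → ℝ) × ℝ) → ((Fin 3 → ℝ) × ℝ) → Prop) (hr : Equivalence r)
    (hinv : IsNewtonInvariant r)
    (hnot_total : ¬ ∀ p q : (Fin 3 → ℝ) × ℝ, r p q)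
    (hnot_id : ¬ ∀ p q : (Fin 3 → ℝ) × ℝ, r p q → p = q)
    (hcausal : ∀ p q : (Fin 3 → ℝ) × ℝ, r p q → p.2 = q.2) :
    ∀ p q : (Fin 3 → ℝ) × ℝ, r p q ↔ p.2 = q.2 := by
  have e_surj := euclideanSpacetimeEquiv.surjective
  exact e_surj.forall₂.2 <| newton_causal_equivalence_is_absolute_simultaneity_general (by simp)
    (hr.comap _) hinv.isEuclideanInvariant
    (fun h => hnot_id (e_surj.forall₂.2 fun p q hpq => congrArg _ (h p q hpq)))
    (fun _ _ => hcausal _ _)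
end

section
/- Let c > 0, let λ > 0, let A be a 3 × 3 real orthogonal matrix, and let k̄ ∈ ℝ³ with |k̄| < 1/c. Suppose that for every x̄ ∈ ℝ³ and t ∈ ℝ with |x̄| ≤ c t, one has |λ A x̄| ≤ c λ (t + k̄ · (A x̄)). Then k̄ = 0̄. (Consequently, an inertial coordinate system at rest with respect to a Minkowski coordinate system and satisfying two-way light isotropy, whose transition function r' = λ A r, t' = λ(t + k̄ · A r) preserves all causality statements, is itself Minkowskian up to the scale factor λ, and defines the same synchrony.) -/
noncomputable section

/-- Euclidean norm on `ℝ³`. -/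
def enorm3 (v : Fin 3 → ℝ) : ℝ := Real.sqrt (∑ i, v i ^ 2)

/-- Euclidean inner product on `ℝ³`. -/
def dot3 (v w : Fin 3 → ℝ) : ℝ := ∑ i, v i * w i

/-!
A light signal reaches the place `x` at time `‖x‖ / c`. With `y = A x` and `‖x‖ ≤ ‖y‖`, the image
of this event can lie in the future cone only if `‖y‖ ≤ ‖y‖ + c ⟪k, y⟫`, that is, `0 ≤ ⟪k, y⟫`.
Since `A` is onto, this holds for every `y`, and `y = -k` forces `k = 0`.
-/

open scoped RealInnerProductSpace

section InnerProductSpace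

variable {E : Type*} [NormedAddCommGroup E] [InnerProductSpace ℝ E]

theorem eq_zero_of_forall_real_inner_nonneg {k : E} (h : ∀ y, 0 ≤ ⟪k, y⟫) : k = 0 := by
  have hneg : 0 ≤ ⟪k, -k⟫ := h (-k)
  rwa [inner_neg_right, neg_nonneg, real_inner_self_nonpos] at hneg

theorem real_inner_nonneg_of_norm_smul_le {c l t : ℝ} (hc : 0 < c) (hl : 0 < l) {k y : E}
    (ht : c * t ≤ ‖y‖) (h : ‖l • y‖ ≤ c * (l * (t + ⟪k, y⟫))) : 0 ≤ ⟪k, y⟫ := by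
  have hscale : l * ‖y‖ ≤ l * (c * (t + ⟪k, y⟫)) := by
    rwa [norm_smul_of_nonneg hl.le, mul_left_comm] at h
  have hcone : ‖y‖ ≤ c * (t + ⟪k, y⟫) := le_of_mul_le_mul_left hscale hl
  have htilt : 0 ≤ c * ⟪k, y⟫ := by linarith
  exact nonneg_of_mul_nonneg_right htilt hc

theorem causality_preserving_isotropic_implies_standard_synchrony_general
    {F : Type*} [Norm F] {c l : ℝ} (hc : 0 < c) (hl : 0 < l)
    {A : F → E} (hA_surj : Function.Surjective A) (hA_norm : ∀ x, ‖x‖ ≤ ‖A x‖) {k : E}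
    (hcaus : ∀ (x : F) (t : ℝ), ‖x‖ = c * t → ‖l • A x‖ ≤ c * (l * (t + ⟪k, A x⟫))) :
    k = 0 := by
  refine eq_zero_of_forall_real_inner_nonneg (hA_surj.forall.mpr fun x ↦ ?_)
  have hlight : ‖x‖ = c * (‖x‖ / c) := (mul_div_cancel₀ ‖x‖ hc.ne').symm
  exact real_inner_nonneg_of_norm_smul_le hc hl (hlight.symm.trans_le (hA_norm x))
    (hcaus x _ hlight)

end InnerProductSpace

section UnitaryGroup

variable {𝕜 n : Type*} [RCLike 𝕜] [Fintype n] [DecidableEq n] {A : Matrix n n 𝕜}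

theorem toEuclideanCLM_mem_unitary_of_mem_unitaryGroup (hA : A ∈ Matrix.unitaryGroup n 𝕜) :
    Matrix.toEuclideanCLM (𝕜 := 𝕜) A ∈ unitary (EuclideanSpace 𝕜 n →L[𝕜] EuclideanSpace 𝕜 n) :=
  Unitary.map_mem Matrix.toEuclideanCLM hA

theorem norm_toEuclideanCLM_of_mem_unitaryGroup (hA : A ∈ Matrix.unitaryGroup n 𝕜)
    (x : EuclideanSpace 𝕜 n) :
    ‖Matrix.toEuclideanCLM (𝕜 := 𝕜) A x‖ = ‖x‖ :=
  ContinuousLinearMap.norm_map_of_mem_unitary (toEuclideanCLM_mem_unitary_of_mem_unitaryGroup hA) x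

theorem toEuclideanCLM_surjective_of_mem_unitaryGroup (hA : A ∈ Matrix.unitaryGroup n 𝕜) :
    Function.Surjective (Matrix.toEuclideanCLM (𝕜 := 𝕜) A) :=
  (Unitary.linearIsometryEquiv ⟨_, toEuclideanCLM_mem_unitary_of_mem_unitaryGroup hA⟩).surjective

end UnitaryGroup

theorem enorm3_eq_norm_toLp (v : Fin 3 → ℝ) : enorm3 v = ‖WithLp.toLp 2 v‖ := by
  simp only [enorm3, EuclideanSpace.norm_eq, Real.norm_eq_abs, sq_abs]

theorem dot3_eq_inner_toLp (v w : Fin 3 → ℝ) :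
    dot3 v w = ⟪WithLp.toLp 2 v, WithLp.toLp 2 w⟫ := by
  simp only [dot3, PiLp.inner_apply, Real.inner_apply]

/-- Let `c > 0`, `λ > 0`, `A` orthogonal, and `k̄` with `|k̄| < 1/c`.  If the
transition map `r' = λ A r`, `t' = λ (t + k̄ ⬝ A r)` sends every event in the
future light cone (`|x̄| ≤ c t`) to an event in the future light cone
(`|λ A x̄| ≤ c λ (t + k̄ ⬝ A x̄)`), then `k̄ = 0̄`: the system is Minkowskian up to
the scale factor and defines standard synchrony. -/
theorem causality_preserving_isotropic_implies_standard_synchrony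
    (c l : ℝ) (hc : 0 < c) (hl : 0 < l)
    (A : Matrix (Fin 3) (Fin 3) ℝ) (hA : A.transpose * A = 1)
    (k : Fin 3 → ℝ) (hk : enorm3 k < 1 / c)
    (hcaus : ∀ (x : Fin 3 → ℝ) (t : ℝ), enorm3 x ≤ c * t →
      enorm3 (l • A.mulVec x) ≤ c * (l * (t + dot3 k (A.mulVec x)))) :
    k = 0 := by
  have hA' : A ∈ Matrix.orthogonalGroup (Fin 3) ℝ :=
    (Matrix.mem_orthogonalGroup_iff' (Fin 3) ℝ).mpr hA
  simp only [enorm3_eq_norm_toLp, dot3_eq_inner_toLp] at hcaus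
  exact (WithLp.toLp_eq_zero 2).mp <|
    causality_preserving_isotropic_implies_standard_synchrony_general hc hl
      (toEuclideanCLM_surjective_of_mem_unitaryGroup hA')
      (fun x ↦ (norm_toEuclideanCLM_of_mem_unitaryGroup hA' x).ge)
      fun x t hx ↦ hcaus x.ofLp t hx.le
end
end
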